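/- arXiv:2603.08449 — 3 statements merged into one kernel-verified Lean document; each statement's English description precedes it below -/
import Mathlib

section
/- Let K ∈ L¹(ℝ, ℂ) and let λ ∈ ℂ with λ ≠ 0 and λ ≠ K̂(ξ) for every ξ ∈ ℝ, where K̂(ξ) = ∫_ℝ K(t) e^{−itξ} dt. Then there exists a function A ∈ L¹(ℝ, ℂ) such that λ·A(x) − (K ⋆ A)(x) = K(x) for almost every x ∈ ℝ, where (K ⋆ A)(x) = ∫_ℝ K(s) A(x − s) ds is the usual convolution. -/
open MeasureTheory

/-!
Convolution with `K` is the integral `∫ K(t) τ_t dt` of the translations `τ_t` of `L¹`, so all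
these operators lie in one closed commutative algebra `B` of bounded operators. If `l` is a
nonzero point of the spectrum of `C = ∫ K(t) τ_t dt`, Gelfand theory gives a character `φ` of `B`
with `φ C = l`, and `χ(t) = φ(τ_t)` is a bounded multiplicative function on the group, hence
unitary. Translations are only strongly continuous, but `t ↦ τ_t C` is norm continuous, because
translation is continuous on `L¹` and `τ_t C` is convolution with a translate of `K`; dividing
`φ(τ_t C) = χ(t) l` by `l ≠ 0` shows that `χ` is continuous. Applying `φ` to
`C² = ∫ K(t) τ_t C dt` then gives `l = ∫ K(t) χ(t) dt`, a value of the Fourier transform of `K`. So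
if `l` is neither zero nor such a value, `l - C` is invertible. On `ℝ` every such `χ` is an
exponential, by lifting through the covering `ℝ → Circle`.
-/

section Characters

lemma norm_eq_one_of_forall_norm_le {G 𝕜 : Type*} [AddGroup G] [NormedDivisionRing 𝕜]
    (χ : AddChar G 𝕜) {M : ℝ} (hM : ∀ t, ‖χ t‖ ≤ M) (t : G) : ‖χ t‖ = 1 := by
  have norm_le_one (s : G) : ‖χ s‖ ≤ 1 := by
    by_contra! hs
    obtain ⟨n, hn⟩ := pow_unbounded_of_one_lt M hs
    refine (hM (n • s)).not_gt ?_
    rwa [χ.map_nsmul_eq_pow, norm_pow]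
  refine (norm_le_one t).antisymm ?_
  have norm_mul_norm_neg : ‖χ t‖ * ‖χ (-t)‖ = 1 := by
    rw [← norm_mul, ← χ.map_add_eq_mul, add_neg_cancel, χ.map_zero_eq_one, norm_one]
  exact norm_mul_norm_neg.ge.trans (mul_le_of_le_one_right (norm_nonneg _) (norm_le_one _))

lemma exists_addChar_circle_coe_eq {G : Type*} [AddMonoid G] [TopologicalSpace G]
    (χ : AddChar G ℂ) (hχ : Continuous χ) (hnorm : ∀ t, ‖χ t‖ = 1) :
    ∃ ψ : AddChar G Circle, Continuous ψ ∧ ∀ t, (ψ t : ℂ) = χ t := by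
  have mem_circle (t : G) : χ t ∈ Submonoid.unitSphere ℂ := mem_sphere_zero_iff_norm.mpr (hnorm t)
  refine ⟨⟨fun t ↦ ⟨χ t, mem_circle t⟩, ?_, fun s t ↦ ?_⟩, hχ.subtype_mk mem_circle, fun t ↦ rfl⟩
  · exact Circle.ext χ.map_zero_eq_one
  · exact Circle.ext (χ.map_add_eq_mul s t)

lemma exists_circleExp_eq_of_continuous_addChar {V : Type*} [AddCommGroup V] [Module ℝ V]
    [TopologicalSpace V] [IsTopologicalAddGroup V] [ContinuousSMul ℝ V] [LocallyConvexSpace ℝ V]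
    (χ : AddChar V Circle) (hχ : Continuous χ) :
    ∃ L : V →L[ℝ] ℝ, ∀ v, χ v = Circle.exp (L v) := by
  have : ContractibleSpace V := RealTopologicalVectorSpace.contractibleSpace
  obtain ⟨θ, ⟨hθ0, hθ⟩, -⟩ := Circle.isCoveringMap_exp.existsUnique_continuousMap_lifts
    ⟨χ, hχ⟩ 0 0 (by simp)
  have exp_lift (v : V) : Circle.exp (θ v) = χ v := congrFun hθ v
  have lift_add (v w : V) : θ (v + w) = θ v + θ w := by
    -- Both sides lift `v ↦ χ (v + w)` and agree at `v = 0`.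
    refine congrFun (Circle.isCoveringMap_exp.eq_of_comp_eq (g₁ := fun v ↦ θ (v + w))
      (g₂ := fun v ↦ θ v + θ w) (by fun_prop) (by fun_prop) ?_ 0 (by simp [hθ0])) v
    funext v
    simp [exp_lift, Circle.exp_add, χ.map_add_eq_mul]
  exact ⟨(AddMonoidHom.mk' θ lift_add).toRealLinearMap θ.continuous, fun v ↦ (exp_lift v).symm⟩

lemma exists_cexp_eq_of_continuous_addChar_real (χ : AddChar ℝ Circle) (hχ : Continuous χ) :
    ∃ ξ : ℝ, ∀ t : ℝ, (χ t : ℂ) = Complex.exp (-(Complex.I * (t : ℂ) * (ξ : ℂ))) := by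
  obtain ⟨L, hL⟩ := exists_circleExp_eq_of_continuous_addChar χ hχ
  refine ⟨-L 1, fun t ↦ ?_⟩
  have apply_eq : L t = t * L 1 := by rw [← smul_eq_mul, ← map_smul, smul_eq_mul, mul_one]
  rw [hL, Circle.coe_exp, apply_eq]
  push_cast
  ring_nf

end Characters

section Spectrum

lemma exists_smul_sub_apply_eq_of_notMem_spectrum {𝕜 X : Type*} [NontriviallyNormedField 𝕜]
    [NormedAddCommGroup X] [NormedSpace 𝕜 X] {T : X →L[𝕜] X} {l : 𝕜} (hl : l ∉ spectrum 𝕜 T)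
    (y : X) : ∃ x, l • x - T x = y := by
  obtain ⟨u, hu⟩ := spectrum.notMem_iff.mp hl
  refine ⟨(↑u⁻¹ : X →L[𝕜] X) y, ?_⟩
  calc l • (↑u⁻¹ : X →L[𝕜] X) y - T ((↑u⁻¹ : X →L[𝕜] X) y)
      = (algebraMap 𝕜 (X →L[𝕜] X) l - T) ((↑u⁻¹ : X →L[𝕜] X) y) := rfl
    _ = ((u : X →L[𝕜] X) * ↑u⁻¹) y := by rw [hu]; rfl
    _ = y := by rw [u.mul_inv]; rfl

variable {R : Type*} [NormedRing R] [NormedAlgebra ℂ R] [CompleteSpace R]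

lemma exists_character_of_mem_spectrum {S : Set R} (hS : ∀ a ∈ S, ∀ b ∈ S, a * b = b * a)
    {a : R} (ha : a ∈ S) {l : ℂ} (hl : l ∈ spectrum ℂ a) :
    ∃ (B : Subalgebra ℂ R) (hSB : S ⊆ B) (φ : B →A[ℂ] ℂ),
      IsClosed (B : Set R) ∧ φ ⟨a, hSB ha⟩ = l := by
  set B : Subalgebra ℂ R := Subalgebra.centralizer ℂ S.centralizer
  have hSB : S ⊆ B := Set.subset_centralizer_centralizer
  have isClosed_B : IsClosed (B : Set R) := Set.isClosed_centralizer _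
  have : CompleteSpace B := isClosed_B.completeSpace_coe
  let _ : NormedCommRing B :=
    { (inferInstance : NormedRing B) with
      mul_comm x y := Subtype.ext <|
        Set.centralizer_centralizer_comm_of_comm hS _ x.2 _ y.2 }
  have hl_B : l ∈ spectrum ℂ (⟨a, hSB ha⟩ : B) := AlgHom.spectrum_apply_subset B.val _ hl
  obtain ⟨φ, hφ⟩ := WeakDual.CharacterSpace.mem_spectrum_iff_exists.mp hl_B
  exact ⟨B, hSB, ⟨WeakDual.CharacterSpace.toAlgHom φ, map_continuous φ⟩, isClosed_B, hφ⟩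

variable {G : Type*} [TopologicalSpace G] [SecondCountableTopology G] [MeasurableSpace G]
  [OpensMeasurableSpace G] {μ : Measure G}

lemma exists_addChar_integral_eq_apply [AddGroup G] (φ : R →A[ℂ] ℂ) (T : AddChar G R) {M : ℝ}
    (hM : ∀ t, ‖T t‖ ≤ M) {C : R} (hcont : Continuous fun t ↦ T t * C) {K : G → ℂ}
    (hK : Integrable K μ) (hCC : C * C = ∫ t, K t • (T t * C) ∂μ) (hφC : φ C ≠ 0) :
    ∃ χ : AddChar G Circle, Continuous χ ∧ ∫ t, K t * χ t ∂μ = φ C := by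
  have : SecondCountableTopologyEither G R := ⟨.inl inferInstance⟩
  let χ : AddChar G ℂ := (φ : R →* ℂ).compAddChar T
  have χ_apply (t : G) : χ t = φ (T t) := rfl
  have continuous_χ : Continuous χ := by
    have χ_eq_div : χ = fun t ↦ φ (T t * C) / φ C := by
      funext t
      rw [χ_apply, map_mul, mul_div_cancel_right₀ _ hφC]
    rw [χ_eq_div]
    exact (φ.continuous.comp hcont).div_const _
  have norm_χ : ∀ t, ‖χ t‖ = 1 :=
    norm_eq_one_of_forall_norm_le χ (M := ‖φ.toContinuousLinearMap‖ * M) fun t ↦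
      φ.toContinuousLinearMap.le_opNorm_of_le (hM t)
  obtain ⟨ψ, continuous_ψ, hψ⟩ := exists_addChar_circle_coe_eq χ continuous_χ norm_χ
  refine ⟨ψ, continuous_ψ, mul_right_cancel₀ hφC ?_⟩
  have hint : Integrable (fun t ↦ K t • (T t * C)) μ :=
    hK.smul_bdd (M * ‖C‖) hcont.aestronglyMeasurable <| .of_forall fun t ↦
      norm_mul_le_of_le (hM t) le_rfl
  calc (∫ t, K t * ψ t ∂μ) * φ C = ∫ t, φ.toContinuousLinearMap (K t • (T t * C)) ∂μ := by
        rw [← integral_mul_const]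
        congr 1 with t
        simp [hψ, χ_apply, mul_assoc]
    _ = φ (C * C) := by rw [φ.toContinuousLinearMap.integral_comp_comm hint, hCC]; rfl
    _ = φ C * φ C := map_mul φ C C

theorem exists_addChar_of_mem_spectrum [AddCommGroup G] (T : AddChar G R) {M : ℝ}
    (hM : ∀ t, ‖T t‖ ≤ M) {C : R} (hTC : ∀ t, Commute (T t) C)
    (hcont : Continuous fun t ↦ T t * C) {K : G → ℂ} (hK : Integrable K μ)
    (hCC : C * C = ∫ t, K t • (T t * C) ∂μ) {l : ℂ} (hl : l ∈ spectrum ℂ C) (hl0 : l ≠ 0) :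
    ∃ χ : AddChar G Circle, Continuous χ ∧ ∫ t, K t * χ t ∂μ = l := by
  have hcomm : ∀ a ∈ insert C (Set.range T), ∀ b ∈ insert C (Set.range T), a * b = b * a := by
    rintro _ (rfl | ⟨s, rfl⟩) _ (rfl | ⟨t, rfl⟩)
    · rfl
    · exact (hTC t).symm
    · exact hTC s
    · rw [← T.map_add_eq_mul, ← T.map_add_eq_mul, add_comm]
  obtain ⟨B, hSB, φ, isClosed_B, hφC⟩ := exists_character_of_mem_spectrum hcomm (.inl rfl) hl
  have : CompleteSpace B := isClosed_B.completeSpace_coe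
  let T' : AddChar G B :=
    ⟨fun t ↦ ⟨T t, hSB (.inr ⟨t, rfl⟩)⟩, Subtype.ext T.map_zero_eq_one,
      fun s t ↦ Subtype.ext (T.map_add_eq_mul s t)⟩
  let C' : B := ⟨C, hSB (.inl rfl)⟩
  have hCC' : C' * C' = ∫ t, K t • (T' t * C') ∂μ :=
    Subtype.ext <| hCC.trans <|
      B.toSubmodule.subtypeₗᵢ.integral_comp_comm (fun t ↦ K t • (T' t * C'))
  obtain ⟨χ, continuous_χ, hχ⟩ := exists_addChar_integral_eq_apply φ T' hM (C := C')
    (hcont.subtype_mk _) hK hCC' (hφC.trans_ne hl0)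
  exact ⟨χ, continuous_χ, hχ.trans hφC⟩

end Spectrum

section Translation

open scoped ENNReal

variable {G : Type*} [AddCommGroup G] [MeasurableSpace G] [MeasurableAdd G] (μ : Measure G)
  [μ.IsAddLeftInvariant] (E : Type*) [NormedAddCommGroup E] [NormedSpace ℂ E]
  (p : ℝ≥0∞) [Fact (1 ≤ p)]

/-- Translation by `t` on `Lp E p μ`, in the convention `(τ_t f)(x) = f (x - t)` of convolutions. -/
noncomputable def translateLp (t : G) : Lp E p μ →ₗᵢ[ℂ] Lp E p μ :=
  Lp.compMeasurePreservingₗᵢ ℂ (· - t) (measurePreserving_sub_right μ t)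

variable {E p}

lemma coeFn_translateLp (t : G) (f : Lp E p μ) : translateLp μ E p t f =ᵐ[μ] fun x ↦ f (x - t) :=
  Lp.coeFn_compMeasurePreserving f (measurePreserving_sub_right μ t)

lemma translateLp_zero (f : Lp E p μ) : translateLp μ E p 0 f = f := by
  apply Lp.ext
  filter_upwards [coeFn_translateLp μ 0 f] with x hx
  rw [hx, sub_zero]

lemma translateLp_add (s t : G) (f : Lp E p μ) :
    translateLp μ E p (s + t) f = translateLp μ E p s (translateLp μ E p t f) := by
  apply Lp.ext
  filter_upwards [coeFn_translateLp μ (s + t) f, coeFn_translateLp μ s (translateLp μ E p t f),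
    (measurePreserving_sub_right μ s).quasiMeasurePreserving.ae (coeFn_translateLp μ t f)]
    with x h_add h_outer h_inner
  rw [h_add, h_outer, h_inner, sub_sub]

lemma continuous_translateLp {G : Type*} [AddCommGroup G] [TopologicalSpace G]
    [IsTopologicalAddGroup G] [MeasurableSpace G] [BorelSpace G] (μ : Measure G)
    [μ.IsAddLeftInvariant] [IsLocallyFiniteMeasure μ] [μ.InnerRegularCompactLTTop] (hp : p ≠ ∞)
    (f : Lp E p μ) : Continuous fun t ↦ translateLp μ E p t f := by
  let sub : C(G, C(G, G)) := (ContinuousMap.mk (fun a : G × G ↦ a.2 - a.1) (by fun_prop)).curry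
  exact (continuous_const (y := f)).compMeasurePreservingLp sub.continuous
    (measurePreserving_sub_right μ) hp

end Translation

/-- A bounded, strongly continuous representation of the additive topological monoid `G` on the
complex normed space `X`. The homomorphism is an `AddChar`, since `G` is written additively and the
algebra of operators multiplicatively. -/
structure BoundedRep (G X : Type*) [AddMonoid G] [TopologicalSpace G] [NormedAddCommGroup X]
    [NormedSpace ℂ X] where
  toAddChar : AddChar G (X →L[ℂ] X)
  bound : ℝ
  norm_le : ∀ t, ‖toAddChar t‖ ≤ bound
  continuous_apply : ∀ x, Continuous fun t ↦ toAddChar t x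

namespace BoundedRep

section AddMonoid

variable {G X : Type*} [AddMonoid G] [TopologicalSpace G] [NormedAddCommGroup X] [NormedSpace ℂ X]

instance : CoeFun (BoundedRep G X) fun _ ↦ G → X →L[ℂ] X := ⟨fun π ↦ π.toAddChar⟩

variable (π : BoundedRep G X)

lemma add_apply (s t : G) (x : X) : π (s + t) x = π s (π t x) :=
  DFunLike.congr_fun (π.toAddChar.map_add_eq_mul s t) x

lemma norm_apply_le (t : G) (x : X) : ‖π t x‖ ≤ π.bound * ‖x‖ :=
  (π t).le_of_opNorm_le (π.norm_le t) x

variable [MeasurableSpace G] {μ : Measure G}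

lemma norm_integral_smul_apply_le (K : Lp ℂ 1 μ) (x : X) :
    ‖∫ t, K t • π t x ∂μ‖ ≤ π.bound * ‖K‖ * ‖x‖ :=
  calc ‖∫ t, K t • π t x ∂μ‖ ≤ ∫ t, ‖K t‖ * (π.bound * ‖x‖) ∂μ := by
        refine norm_integral_le_of_norm_le ((L1.integrable_coeFn K).norm.mul_const _)
          (.of_forall fun t ↦ ?_)
        rw [norm_smul]
        gcongr
        exact π.norm_apply_le t x
    _ = π.bound * ‖K‖ * ‖x‖ := by
        rw [integral_mul_const, ← L1.norm_eq_integral_norm]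
        ring

variable [SecondCountableTopology G] [OpensMeasurableSpace G]

lemma integrable_smul_apply {K : G → ℂ} (hK : Integrable K μ) (x : X) :
    Integrable (fun t ↦ K t • π t x) μ := by
  have : SecondCountableTopologyEither G X := ⟨.inl inferInstance⟩
  exact hK.smul_bdd (π.bound * ‖x‖) (π.continuous_apply x).aestronglyMeasurable
    (.of_forall fun t ↦ π.norm_apply_le t x)

variable (μ) in
/-- The integrated form `K ↦ ∫ K(t) π(t) dμ(t)` of the representation `π`, as a bounded map from
`L¹` to operators. The integral converges only strongly, so it is taken after applying the operators
to a vector. -/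
noncomputable def integrated : Lp ℂ 1 μ →L[ℂ] X →L[ℂ] X :=
  LinearMap.mkContinuous₂
    (LinearMap.mk₂ ℂ (fun K x ↦ ∫ t, K t • π t x ∂μ)
      (fun K K' x ↦ by
        rw [← integral_add (π.integrable_smul_apply (L1.integrable_coeFn K) x)
          (π.integrable_smul_apply (L1.integrable_coeFn K') x)]
        refine integral_congr_ae ?_
        filter_upwards [Lp.coeFn_add K K'] with t ht
        rw [ht, Pi.add_apply, add_smul])
      (fun c K x ↦ by
        rw [← integral_smul]
        refine integral_congr_ae ?_
        filter_upwards [Lp.coeFn_smul c K] with t ht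
        rw [ht, Pi.smul_apply, smul_assoc])
      (fun K x y ↦ by
        rw [← integral_add (π.integrable_smul_apply (L1.integrable_coeFn K) x)
          (π.integrable_smul_apply (L1.integrable_coeFn K) y)]
        simp only [map_add, smul_add])
      (fun c K x ↦ by
        rw [← integral_smul]
        simp only [map_smul, smul_comm c]))
    π.bound π.norm_integral_smul_apply_le

lemma integrated_apply (K : Lp ℂ 1 μ) (x : X) : π.integrated μ K x = ∫ t, K t • π t x ∂μ := rfl

lemma integrated_mul {S : X →L[ℂ] X} (hS : Continuous fun t ↦ π t * S) (K : Lp ℂ 1 μ) :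
    π.integrated μ K * S = ∫ t, K t • (π t * S) ∂μ := by
  have : SecondCountableTopologyEither G (X →L[ℂ] X) := ⟨.inl inferInstance⟩
  have hint : Integrable (fun t ↦ K t • (π t * S)) μ :=
    (L1.integrable_coeFn K).smul_bdd (π.bound * ‖S‖) hS.aestronglyMeasurable <|
      .of_forall fun t ↦ norm_mul_le_of_le (π.norm_le t) le_rfl
  ext1 x
  rw [ContinuousLinearMap.integral_apply hint]
  rfl

variable [CompleteSpace X]

lemma apply_integrated_apply (t : G) (K : Lp ℂ 1 μ) (x : X) :
    π t (π.integrated μ K x) = ∫ s, K s • π (t + s) x ∂μ := by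
  rw [integrated_apply,
    ← (π t).integral_comp_comm (π.integrable_smul_apply (L1.integrable_coeFn K) x)]
  simp only [map_smul, add_apply]

end AddMonoid

section AddCommGroup

variable {G X : Type*} [AddCommGroup G] [TopologicalSpace G] [SecondCountableTopology G]
  [MeasurableSpace G] [BorelSpace G] {μ : Measure G} [NormedAddCommGroup X] [NormedSpace ℂ X]
  [CompleteSpace X] (π : BoundedRep G X)

lemma commute_integrated (t : G) (K : Lp ℂ 1 μ) : Commute (π t) (π.integrated μ K) := by
  ext1 x
  calc π t (π.integrated μ K x) = ∫ s, K s • π (s + t) x ∂μ := by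
        simp only [apply_integrated_apply, add_comm t]
    _ = π.integrated μ K (π t x) := by simp only [add_apply, integrated_apply]

variable [IsTopologicalAddGroup G] [μ.IsAddLeftInvariant]

lemma mul_integrated (t : G) (K : Lp ℂ 1 μ) :
    π t * π.integrated μ K = π.integrated μ (translateLp μ ℂ 1 t K) := by
  ext1 x
  calc π t (π.integrated μ K x) = ∫ s, K s • π (t + s) x ∂μ := π.apply_integrated_apply t K x
    _ = ∫ s, K (s - t) • π s x ∂μ := by
        rw [← integral_sub_right_eq_self _ t]
        simp only [add_sub_cancel]
    _ = π.integrated μ (translateLp μ ℂ 1 t K) x := by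
        refine integral_congr_ae ?_
        filter_upwards [coeFn_translateLp μ t K] with s hs
        rw [hs]

variable [IsLocallyFiniteMeasure μ] [μ.InnerRegularCompactLTTop]

lemma continuous_mul_integrated (K : Lp ℂ 1 μ) : Continuous fun t ↦ π t * π.integrated μ K := by
  simp only [mul_integrated]
  exact (π.integrated μ).continuous.comp (continuous_translateLp μ ENNReal.one_ne_top K)

theorem exists_addChar_of_mem_spectrum_integrated {K : Lp ℂ 1 μ} {l : ℂ}
    (hl : l ∈ spectrum ℂ (π.integrated μ K)) (hl0 : l ≠ 0) :
    ∃ χ : AddChar G Circle, Continuous χ ∧ ∫ t, K t * χ t ∂μ = l :=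
  exists_addChar_of_mem_spectrum π.toAddChar π.norm_le (π.commute_integrated · K)
    (π.continuous_mul_integrated K) (L1.integrable_coeFn K)
    (π.integrated_mul (π.continuous_mul_integrated K) K) hl hl0

end AddCommGroup

end BoundedRep

section Convolution

open scoped ENNReal

variable {G : Type*} [AddCommGroup G] [TopologicalSpace G] [IsTopologicalAddGroup G]
  [MeasurableSpace G] [BorelSpace G] (μ : Measure G) [μ.IsAddLeftInvariant]
  [IsLocallyFiniteMeasure μ] [μ.InnerRegularCompactLTTop]
  {E : Type*} [NormedAddCommGroup E] [NormedSpace ℂ E]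

/-- The regular representation of `G` on `Lp E p μ`, which is strongly continuous for `p < ∞`; for
`p = 1` its integrated form is convolution. -/
noncomputable def translationRep {p : ℝ≥0∞} [Fact (1 ≤ p)] (hp : p ≠ ∞) :
    BoundedRep G (Lp E p μ) where
  toAddChar :=
    { toFun t := (translateLp μ E p t).toContinuousLinearMap
      map_zero_eq_one' := ContinuousLinearMap.ext <| translateLp_zero μ
      map_add_eq_mul' s t := ContinuousLinearMap.ext <| translateLp_add μ s t }
  bound := 1
  norm_le t := (translateLp μ E p t).norm_toContinuousLinearMap_le
  continuous_apply := continuous_translateLp μ hp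

lemma exists_clm_eq_setIntegral {α F : Type*} [MeasurableSpace α] [NormedAddCommGroup F]
    [NormedSpace ℝ F] [CompleteSpace F] (ν : Measure α) (s : Set α) :
    ∃ L : Lp F 1 ν →L[ℝ] F, ∀ f, L f = ∫ x in s, f x ∂ν := by
  refine ⟨L1.integralCLM.comp (LpToLpRestrictCLM α F ℝ ν 1 s), fun f ↦ ?_⟩
  rw [← integral_congr_ae (LpToLpRestrictCLM_coeFn ℝ s f), ← L1.integral_eq_integral,
    L1.integral_eq]
  rfl

variable {μ} [SecondCountableTopology G] [CompleteSpace E]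

-- Both sides have the same integral over every set, by Fubini.
lemma coeFn_integrated_translationRep (K : Lp ℂ 1 μ) (f : Lp E 1 μ) :
    (translationRep μ ENNReal.one_ne_top).integrated μ K f =ᵐ[μ]
      fun x ↦ ∫ s, K s • f (x - s) ∂μ := by
  set τ : BoundedRep G (Lp E 1 μ) := translationRep μ ENNReal.one_ne_top
  have hK : Integrable K μ := L1.integrable_coeFn K
  have hconv : Integrable (fun q : G × G ↦ K q.2 • f (q.1 - q.2)) (μ.prod μ) :=
    hK.convolution_integrand (ContinuousLinearMap.lsmul ℂ ℂ) (L1.integrable_coeFn f)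
  refine Integrable.ae_eq_of_forall_setIntegral_eq _ _ (L1.integrable_coeFn _)
    hconv.integral_prod_left fun S _ _ ↦ ?_
  have hconv_S : Integrable (fun q : G × G ↦ K q.2 • f (q.1 - q.2)) ((μ.restrict S).prod μ) := by
    have := hconv.restrict (s := S ×ˢ Set.univ)
    rwa [← Measure.prod_restrict, Measure.restrict_univ] at this
  obtain ⟨L, hL⟩ := exists_clm_eq_setIntegral (F := E) μ S
  have L_smul_translate (s : G) : L (K s • τ s f) = ∫ x in S, K s • f (x - s) ∂μ := by
    rw [hL]
    refine integral_congr_ae (ae_restrict_of_ae ?_)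
    filter_upwards [Lp.coeFn_smul (K s) (τ s f), coeFn_translateLp μ s f] with x h_smul h_translate
    exact h_smul.trans (congrArg (K s • ·) h_translate)
  calc ∫ x in S, τ.integrated μ K f x ∂μ = L (∫ s, K s • τ s f ∂μ) := (hL _).symm
    _ = ∫ s, ∫ x in S, K s • f (x - s) ∂μ ∂μ := by
        rw [← L.integral_comp_comm (τ.integrable_smul_apply hK f)]
        simp only [L_smul_translate]
    _ = ∫ x in S, ∫ s, K s • f (x - s) ∂μ ∂μ := (integral_integral_swap hconv_S).symm

theorem stmt2_general {K : G → ℂ} (hK : Integrable K μ) {l : ℂ} (hl0 : l ≠ 0)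
    (hl : ∀ χ : AddChar G Circle, Continuous χ → l ≠ ∫ t, K t * χ t ∂μ)
    {f : G → E} (hf : Integrable f μ) :
    ∃ A : G → E, Integrable A μ ∧ ∀ᵐ x ∂μ, l • A x - ∫ s, K s • A (x - s) ∂μ = f x := by
  let τ : BoundedRep G (Lp E 1 μ) := translationRep μ ENNReal.one_ne_top
  let C : Lp E 1 μ →L[ℂ] Lp E 1 μ := τ.integrated μ (hK.toL1 K)
  have l_notMem_spectrum : l ∉ spectrum ℂ C := fun hmem ↦ by
    obtain ⟨χ, continuous_χ, hχ⟩ := τ.exists_addChar_of_mem_spectrum_integrated hmem hl0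
    refine hl χ continuous_χ (hχ.symm.trans (integral_congr_ae ?_))
    filter_upwards [hK.coeFn_toL1] with t ht
    rw [ht]
  obtain ⟨A, hA⟩ := exists_smul_sub_apply_eq_of_notMem_spectrum l_notMem_spectrum (hf.toL1 f)
  have conv_congr (x : G) : ∫ s, hK.toL1 K s • A (x - s) ∂μ = ∫ s, K s • A (x - s) ∂μ := by
    refine integral_congr_ae ?_
    filter_upwards [hK.coeFn_toL1] with s hs
    rw [hs]
  refine ⟨A, L1.integrable_coeFn A, ?_⟩
  filter_upwards [Lp.coeFn_sub (l • A) (C A), Lp.coeFn_smul l A,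
    coeFn_integrated_translationRep (hK.toL1 K) A, hf.coeFn_toL1] with x h_sub h_smul h_conv h_f
  calc l • A x - ∫ s, K s • A (x - s) ∂μ = (l • A - C A : Lp E 1 μ) x := by
        rw [h_sub, Pi.sub_apply, h_smul, Pi.smul_apply, h_conv, conv_congr]
    _ = f x := by rw [hA, h_f]

end Convolution

/-- **Wiener's lemma.** Let `K ∈ L¹(ℝ, ℂ)` and `l ∈ ℂ` with `l ≠ 0` and
`l ≠ K̂(ξ)` for every `ξ ∈ ℝ`, where `K̂(ξ) = ∫ K(t) e^{−itξ} dt`. Then there is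
`A ∈ L¹(ℝ, ℂ)` with `l·A(x) − (K ⋆ A)(x) = K(x)` for almost every `x`. -/
theorem stmt2 (K : ℝ → ℂ) (hK : Integrable K) (l : ℂ) (hl0 : l ≠ 0)
    (hl : ∀ ξ : ℝ, l ≠ ∫ t : ℝ, K t * Complex.exp (-(Complex.I * (t : ℂ) * (ξ : ℂ)))) :
    ∃ A : ℝ → ℂ, Integrable A ∧
      ∀ᵐ x : ℝ, l * A x - (∫ s : ℝ, K s * A (x - s)) = K x := by
  refine stmt2_general hK hl0 (fun χ hχ ↦ ?_) hK
  obtain ⟨ξ, hξ⟩ := exists_cexp_eq_of_continuous_addChar_real χ hχ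
  simpa only [hξ] using hl ξ
end

section
/- Let 1 ≤ p < ∞, a > −1, and let φ : (0,∞) → ℂ be measurable with ∫₀^∞ |φ(t)| t^{(a+1)/p − 1} dt < ∞. Let T be the bounded linear operator on L^p(ℝ, |x|^a) given by T f = H_φ f. Then the spectrum of T equals the closure in ℂ of the set { k̂_{a,p}(ξ) : ξ ∈ ℝ }, where k̂_{a,p}(ξ) = ∫₀^∞ φ(t) t^{(a+1)/p − 1 − iξ} dt. -/
open MeasureTheory

/-- The Hausdorff operator `H_φ f(x) = ∫₀^∞ f(x/t) φ(t) t⁻¹ dt`. -/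
noncomputable def Hphi (φ : ℝ → ℂ) (f : ℝ → ℂ) (x : ℝ) : ℂ :=
  ∫ t in Set.Ioi (0 : ℝ), f (x / t) * φ t / (t : ℂ)

/-- The weighted measure `|x|^a dx` on `ℝ`. -/
noncomputable def weightMeasure (a : ℝ) : Measure ℝ :=
  volume.withDensity fun x => ENNReal.ofReal (|x| ^ a)

/-- `k̂_{a,p}(ξ) = ∫₀^∞ φ(t) t^{c − 1 − iξ} dt` with `c = (a+1)/p`. -/
noncomputable def khat (φ : ℝ → ℂ) (c : ℝ) (ξ : ℝ) : ℂ :=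
  ∫ t in Set.Ioi (0 : ℝ), φ t * (t : ℂ) ^ ((c : ℂ) - 1 - Complex.I * (ξ : ℂ))

/-!
With `c = (a + 1) / p`, the dilations `U_s f = e^{cs} f(e^s ·)` are isometries of `L^p(|x|^a)`, and
the substitution `t = e^{-s}` turns `H_φ` into `T = ∫ k(s) U_s ds` with `k ∈ L¹(ℝ)` and `𝓕 k` a
reparametrization of `k̂_{a,p}`.

A spectral value of `T` is `χ(T)` for a character `χ` of the commutative Banach algebra generated by
`T` and all `U_s`. Although `U` itself is only strongly continuous, `r ↦ U_r T` is norm continuous,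
so when `χ(T) ≠ 0` the bounded homomorphism `r ↦ χ(U_r)` is continuous, i.e. `χ(U_r) = e^{2πirw}`,
and applying `χ` to `T² = ∫ k(r) U_r T dr` gives `χ(T) = 𝓕 k(-w)`. The value `χ(T) = 0` is a limit
of values of `𝓕 k` by the Riemann–Lebesgue lemma.

Conversely the damped powers `|x|^{-c - 2πiw} e^{-δ|log |x||}`, normalized, are approximate
eigenvectors of every `U_s` as `δ → 0`, hence, by dominated convergence, of `T` with eigenvalue
`𝓕 k(w)`.
-/

section

open Filter Topology Real FourierTransform
open scoped ENNReal

theorem hasDerivAt_addChar {ψ : AddChar ℝ ℂ} (hψ : Continuous ψ) (s : ℝ) :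
    HasDerivAt ψ (ψ s * deriv ψ 0) s := by
  let F : ℝ → ℂ := fun u => ∫ t in (0 : ℝ)..u, ψ t
  have hF : ∀ u, HasDerivAt F (ψ u) u := fun u =>
    (hψ.integral_hasStrictDerivAt 0 u).hasDerivAt
  obtain ⟨u, hu⟩ : ∃ u, F u ≠ 0 := by
    by_contra! hF_zero
    have := (hF 0).unique (by simpa [funext hF_zero] using hasDerivAt_const 0 (0 : ℂ))
    simp at this
  -- `ψ s * ∫₀ᵘ ψ = ∫ₛ^{s+u} ψ`, so `ψ` inherits the differentiability of its primitive `F`.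
  have hψ_eq : ⇑ψ = fun s => (F (s + u) - F s) / F u := by
    ext s
    simp only [F, eq_div_iff hu, ← intervalIntegral.integral_const_mul, ← ψ.map_add_eq_mul]
    rw [intervalIntegral.integral_interval_sub_left (hψ.intervalIntegrable _ _)
      (hψ.intervalIntegrable _ _), intervalIntegral.integral_comp_add_left, add_zero]
  have hψ_diff : DifferentiableAt ℝ ψ 0 := by
    have hF_diff : Differentiable ℝ F := fun x => (hF x).differentiableAt
    rw [hψ_eq]
    fun_prop
  have hψ_shift : ⇑ψ = fun t => ψ s * ψ (t - s) := by
    ext t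
    rw [← ψ.map_add_eq_mul, add_sub_cancel]
  rw [← sub_self s] at hψ_diff
  have h := (hψ_diff.hasDerivAt.comp_sub_const s s).const_mul (ψ s)
  rwa [← hψ_shift, sub_self] at h

theorem addChar_eq_exp {ψ : AddChar ℝ ℂ} (hψ : Continuous ψ) (s : ℝ) :
    ψ s = Complex.exp (deriv ψ 0 * s) := by
  set z := deriv ψ 0
  have h_exp (t : ℝ) : HasDerivAt (fun t : ℝ => Complex.exp (-(z * t)))
      (Complex.exp (-(z * t)) * -z) t := by
    simpa using ((Complex.ofRealCLM.hasDerivAt (x := t)).const_mul z).neg.cexp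
  have h_deriv (t : ℝ) : HasDerivAt (fun t : ℝ => ψ t * Complex.exp (-(z * t))) 0 t := by
    refine ((hasDerivAt_addChar hψ t).mul (h_exp t)).congr_deriv ?_
    ring
  have h_const : ψ s * Complex.exp (-(z * s)) = 1 := by
    simpa using is_const_of_deriv_eq_zero (fun t => (h_deriv t).differentiableAt)
      (fun t => (h_deriv t).deriv) s 0
  rwa [Complex.exp_neg, mul_inv_eq_one₀ (Complex.exp_ne_zero _)] at h_const

theorem re_eq_zero_of_norm_exp_mul_le {z : ℂ} {M : ℝ}
    (h : ∀ s : ℝ, ‖Complex.exp (z * s)‖ ≤ M) : z.re = 0 := by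
  by_contra hz
  have := (Real.add_one_le_exp _).trans (by simpa [Complex.norm_exp] using h (M / z.re))
  rw [mul_div_cancel₀ _ hz] at this
  linarith

theorem exists_addChar_eq_fourierChar {ψ : AddChar ℝ ℂ} (hψ : Continuous ψ) {M : ℝ}
    (hM : ∀ s, ‖ψ s‖ ≤ M) : ∃ w : ℝ, ∀ s, ψ s = 𝐞 (s * w) := by
  set z := deriv ψ 0
  have hz : z.re = 0 := re_eq_zero_of_norm_exp_mul_le fun s => addChar_eq_exp hψ s ▸ hM s
  refine ⟨z.im / (2 * π), fun s => ?_⟩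
  rw [addChar_eq_exp hψ, Real.fourierChar_apply, ← Complex.re_add_im (deriv ψ 0), hz]
  congr 1
  push_cast
  field

theorem integrable_exp_smul_comp_exp_iff {E : Type*} [NormedAddCommGroup E] [NormedSpace ℝ E]
    {f : ℝ → E} :
    Integrable (fun s => rexp s • f (rexp s)) ↔ IntegrableOn f (Set.Ioi 0) := by
  rw [← Real.range_exp, ← Set.image_univ,
    integrableOn_image_iff_integrableOn_abs_deriv_smul .univ
      (fun s _ => (Real.hasDerivAt_exp s).hasDerivWithinAt) Real.exp_injective.injOn,
    integrableOn_univ]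
  simp_rw [Real.abs_exp]

theorem integrable_comp_abs {E : Type*} [NormedAddCommGroup E] {f : ℝ → E}
    (hf : IntegrableOn f (Set.Ioi 0)) : Integrable fun x => f |x| := by
  have h_Ioi : IntegrableOn (fun x => f |x|) (Set.Ioi 0) :=
    hf.congr_fun (fun x hx => by rw [abs_of_pos hx]) measurableSet_Ioi
  have h_Iio : IntegrableOn (fun x => f |x|) (Set.Iio 0) := by
    rw [← neg_zero] at h_Ioi
    simpa only [abs_neg] using h_Ioi.comp_neg_Iio
  rw [← integrableOn_univ, ← Set.Iic_union_Ioi (a := (0 : ℝ)), integrableOn_union,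
    integrableOn_Iic_iff_integrableOn_Iio]
  exact ⟨h_Iio, h_Ioi⟩

theorem integrable_exp_neg_log_abs_sub {ε : ℝ} (hε : 0 < ε) :
    Integrable fun x : ℝ => rexp (-log |x| - ε * |log (|x|)|) := by
  refine integrable_comp_abs (f := fun t => rexp (-log t - ε * |log t|))
    (integrable_exp_smul_comp_exp_iff.1 ?_)
  simpa [← Real.exp_add, ← add_sub_assoc, neg_mul] using
    integrable_comp_abs (exp_neg_integrableOn_Ioi 0 hε)

theorem abs_exp_sub_exp_le (x y : ℝ) : |rexp x - rexp y| ≤ (rexp |x - y| - 1) * rexp y := by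
  have h_exp : |rexp (x - y) - 1| ≤ rexp |x - y| - 1 := by
    have h := Complex.norm_exp_sub_sum_le_exp_norm_sub_sum (x - y : ℝ) 1
    simpa [← Complex.ofReal_exp, ← Complex.ofReal_one, ← Complex.ofReal_sub] using h
  calc |rexp x - rexp y|
      = |rexp (x - y) - 1| * rexp y := by
        rw [← abs_of_pos (exp_pos y), ← abs_mul, abs_of_pos (exp_pos y), sub_mul, one_mul,
          ← Real.exp_add, sub_add_cancel]
    _ ≤ (rexp |x - y| - 1) * rexp y := by gcongr

theorem zero_mem_closure_range_fourier {E : Type*} [NormedAddCommGroup E] [NormedSpace ℂ E]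
    (k : ℝ → E) : 0 ∈ closure (Set.range (𝓕 k)) :=
  mem_closure_of_tendsto (Real.zero_at_infty_fourier k) (.of_forall Set.mem_range_self)

theorem tendsto_integral_norm_sub_translate {E : Type*} [NormedAddCommGroup E] {f : ℝ → E}
    (hf : Integrable f) (r₀ : ℝ) :
    Tendsto (fun r => ∫ s, ‖f (s - r) - f (s - r₀)‖) (𝓝 r₀) (𝓝 0) := by
  let τ (r : ℝ) : Lp E 1 (volume : Measure ℝ) := DomAddAct.mk (-r) +ᵥ hf.toL1
  have : Fact ((1 : ℝ≥0∞) ≠ ∞) := ⟨ENNReal.one_ne_top⟩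
  have hτ_coe (r : ℝ) : τ r =ᵐ[volume] fun s => f (s - r) := by
    have h := (measurePreserving_add_left volume (-r)).quasiMeasurePreserving.ae_eq_comp
      hf.coeFn_toL1
    filter_upwards [DomAddAct.vadd_Lp_ae_eq (DomAddAct.mk (-r)) hf.toL1, h] with s hs hs_comp
    rw [hs]
    simpa [neg_add_eq_sub] using hs_comp
  have hτ_cont : Continuous τ := by
    have : Continuous fun r : ℝ => DomAddAct.mk (-r) := DomAddAct.continuous_mk.comp continuous_neg
    fun_prop
  have := tendsto_iff_norm_sub_tendsto_zero.1 (hτ_cont.tendsto r₀)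
  refine this.congr fun r => ?_
  rw [L1.norm_eq_integral_norm]
  refine integral_congr_ae ?_
  filter_upwards [hτ_coe r, hτ_coe r₀, Lp.coeFn_sub (τ r) (τ r₀)] with s h₁ h₂ h₃
  rw [h₃, Pi.sub_apply, h₁, h₂]

theorem map_withDensity_comp {X Y : Type*} [MeasurableSpace X] [MeasurableSpace Y] {μ : Measure X}
    {g : X → Y} (hg : Measurable g) {f : Y → ℝ≥0∞} (hf : Measurable f) :
    (μ.withDensity (f ∘ g)).map g = (μ.map g).withDensity f := by
  ext s hs
  rw [Measure.map_apply hg hs, withDensity_apply _ (hg hs), withDensity_apply _ hs,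
    setLIntegral_map hs hf hg]
  rfl

theorem exists_dual_of_mem_spectrum {B : Type*} [NormedRing B] [NormedAlgebra ℂ B]
    [CompleteSpace B] {S : Set B} (hS : ∀ x ∈ S, ∀ y ∈ S, x * y = y * x) {b : B} (hb : b ∈ S)
    {z : ℂ} (hz : z ∈ spectrum ℂ b) :
    ∃ L : StrongDual ℂ B, L b = z ∧ L 1 = 1 ∧ ∀ x ∈ Algebra.adjoin ℂ S, ∀ y ∈ Algebra.adjoin ℂ S,
      L (x * y) = L x * L y := by
  let A := (Algebra.adjoin ℂ S).topologicalClosure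
  have hA : Algebra.adjoin ℂ S ≤ A := Subalgebra.le_topologicalClosure _
  have : IsMulCommutative (Algebra.adjoin ℂ S) := Algebra.isMulCommutative_adjoin ℂ hS
  let _ : NormedCommRing A :=
    { (inferInstance : NormedRing A) with
      mul_comm := (Subalgebra.commRingTopologicalClosure (Algebra.adjoin ℂ S) mul_comm').mul_comm }
  have : CompleteSpace A := (Subalgebra.isClosed_topologicalClosure _).completeSpace_coe
  have hbA : b ∈ A := hA (Algebra.subset_adjoin hb)
  obtain ⟨χ, hχ⟩ := WeakDual.CharacterSpace.mem_spectrum_iff_exists.1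
    (spectrum.subset_subalgebra (⟨b, hbA⟩ : A) hz)
  obtain ⟨L, hL, -⟩ := exists_extension_norm_eq A.toSubmodule (WeakDual.CharacterSpace.toCLM χ)
  replace hL (x : A) : L x = χ x := hL x
  refine ⟨L, ?_, ?_, fun x hx y hy => ?_⟩
  · rw [← hχ, ← hL]
  · rw [← map_one χ, ← hL, OneMemClass.coe_one]
  · rw [hL ⟨x, hA hx⟩, hL ⟨y, hA hy⟩, ← map_mul, ← hL, MulMemClass.mk_mul_mk]

section IntegratedForm

variable {E : Type*} [NormedAddCommGroup E] [NormedSpace ℂ E] {U : AddChar ℝ (E →L[ℂ] E)}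
  {M : ℝ} {k : ℝ → ℂ} {T : E →L[ℂ] E}

/-- `T` is the integrated form `∫ k(s) U_s ds` of the representation `U` of `ℝ`, which is bounded
by `M` and strongly measurable, at the integrable function `k`. -/
structure IsIntegratedForm (U : AddChar ℝ (E →L[ℂ] E)) (M : ℝ) (k : ℝ → ℂ) (T : E →L[ℂ] E) :
    Prop where
  norm_le (s : ℝ) : ‖U s‖ ≤ M
  aestronglyMeasurable_orbit (f : E) : AEStronglyMeasurable fun s => U s f
  integrable_kernel : Integrable k
  apply_eq_integral (f : E) : T f = ∫ s, k s • U s f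

namespace IsIntegratedForm

theorem norm_apply_le (h : IsIntegratedForm U M k T) (s : ℝ) (f : E) : ‖U s f‖ ≤ M * ‖f‖ :=
  (U s).le_of_opNorm_le (h.norm_le s) f

theorem integrable_smul_orbit (h : IsIntegratedForm U M k T) {l : ℝ → ℂ} (hl : Integrable l)
    (f : E) : Integrable fun s => l s • U s f :=
  hl.smul_bdd _ (h.aestronglyMeasurable_orbit f) (.of_forall fun s => h.norm_apply_le s f)

variable [CompleteSpace E]

theorem orbit_apply_apply (h : IsIntegratedForm U M k T) (r : ℝ) (f : E) :
    U r (T f) = ∫ s, k (s - r) • U s f := by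
  rw [h.apply_eq_integral,
    ← (U r).integral_comp_comm (h.integrable_smul_orbit h.integrable_kernel f),
    ← integral_add_right_eq_self (fun s => k (s - r) • U s f) r]
  simp_rw [map_smul, ← mul_apply_eq_comp, ← U.map_add_eq_mul, add_sub_cancel_right, add_comm r]

theorem commute_orbit (h : IsIntegratedForm U M k T) (r : ℝ) : Commute T (U r) := by
  ext f
  simp_rw [mul_apply_eq_comp, h.apply_eq_integral,
    ← (U r).integral_comp_comm (h.integrable_smul_orbit h.integrable_kernel f), map_smul,
    ← mul_apply_eq_comp, ← U.map_add_eq_mul, add_comm]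

theorem norm_orbit_mul_sub_le (h : IsIntegratedForm U M k T) (r r₀ : ℝ) :
    ‖U r * T - U r₀ * T‖ ≤ (∫ s, ‖k (s - r) - k (s - r₀)‖) * M := by
  have hM : 0 ≤ M := (norm_nonneg _).trans (h.norm_le 0)
  have hk (r : ℝ) : Integrable fun s => k (s - r) := h.integrable_kernel.comp_sub_right r
  refine ContinuousLinearMap.opNorm_le_bound _ (by positivity) fun f => ?_
  calc ‖(U r * T - U r₀ * T) f‖
      = ‖∫ s, (k (s - r) - k (s - r₀)) • U s f‖ := by
        simp only [sub_smul, sub_apply, mul_apply_eq_comp, h.orbit_apply_apply]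
        rw [integral_sub (h.integrable_smul_orbit (hk r) f) (h.integrable_smul_orbit (hk r₀) f)]
    _ ≤ ∫ s, ‖k (s - r) - k (s - r₀)‖ * (M * ‖f‖) := by
        refine norm_integral_le_of_norm_le (((hk r).sub (hk r₀)).norm.mul_const _)
          (.of_forall fun s => ?_)
        rw [norm_smul]
        gcongr
        exact h.norm_apply_le s f
    _ = (∫ s, ‖k (s - r) - k (s - r₀)‖) * M * ‖f‖ := by
        rw [integral_mul_const, mul_assoc]

theorem continuous_orbit_mul (h : IsIntegratedForm U M k T) : Continuous fun r => U r * T := by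
  refine continuous_iff_continuousAt.2 fun r₀ => tendsto_iff_norm_sub_tendsto_zero.2 ?_
  have h_lim := (tendsto_integral_norm_sub_translate h.integrable_kernel r₀).mul_const M
  rw [zero_mul] at h_lim
  exact squeeze_zero (fun _ => norm_nonneg _) (fun r => h.norm_orbit_mul_sub_le r r₀) h_lim

theorem integrable_smul_orbit_mul (h : IsIntegratedForm U M k T) :
    Integrable fun r => k r • (U r * T) := by
  refine h.integrable_kernel.smul_bdd (M * ‖T‖) h.continuous_orbit_mul.aestronglyMeasurable
    (.of_forall fun r => (norm_mul_le _ _).trans ?_)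
  gcongr
  exact h.norm_le r

theorem mul_self_eq_integral (h : IsIntegratedForm U M k T) :
    T * T = ∫ r, k r • (U r * T) := by
  ext f
  rw [ContinuousLinearMap.integral_apply h.integrable_smul_orbit_mul, mul_apply_eq_comp,
    h.apply_eq_integral]
  rfl

theorem continuous_apply_orbit (h : IsIntegratedForm U M k T) {L : StrongDual ℂ (E →L[ℂ] E)}
    (hL : ∀ r, L (U r * T) = L (U r) * L T) (hT : L T ≠ 0) : Continuous fun r => L (U r) := by
  have h_eq : (fun r => L (U r)) = fun r => L (U r * T) / L T :=
    funext fun r => (eq_div_iff hT).2 (hL r).symm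
  rw [h_eq]
  exact (L.continuous.comp h.continuous_orbit_mul).div_const _

theorem apply_mem_range_fourier (h : IsIntegratedForm U M k T) {L : StrongDual ℂ (E →L[ℂ] E)}
    (hL_one : L 1 = 1) (hL_add : ∀ r s, L (U r * U s) = L (U r) * L (U s))
    (hL_mul : ∀ r, L (U r * T) = L (U r) * L T) (hL_sq : L (T * T) = L T * L T)
    (hT : L T ≠ 0) : L T ∈ Set.range (𝓕 k) := by
  let ψ : AddChar ℝ ℂ :=
    { toFun r := L (U r)
      map_zero_eq_one' := by rw [U.map_zero_eq_one, hL_one]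
      map_add_eq_mul' r s := by rw [U.map_add_eq_mul, hL_add] }
  have hψ_bound (r : ℝ) : ‖ψ r‖ ≤ ‖L‖ * M := L.le_opNorm_of_le (h.norm_le r)
  obtain ⟨w, hw⟩ := exists_addChar_eq_fourierChar (h.continuous_apply_orbit hL_mul hT) hψ_bound
  replace hw (r : ℝ) : L (U r) = 𝐞 (r * w) := hw r
  refine ⟨-w, mul_right_cancel₀ hT ?_⟩
  calc 𝓕 k (-w) * L T = ∫ r, k r • L (U r * T) := by
        rw [Real.fourier_real_eq, ← integral_mul_const]
        simp_rw [hL_mul, hw, mul_neg, neg_neg, Circle.smul_def, smul_eq_mul]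
        congr! 2
        ring
    _ = L T * L T := by
        rw [← hL_sq, h.mul_self_eq_integral,
          ← L.integral_comp_comm h.integrable_smul_orbit_mul]
        simp_rw [map_smul]

theorem spectrum_subset (h : IsIntegratedForm U M k T) :
    spectrum ℂ T ⊆ closure (Set.range (𝓕 k)) := by
  intro z hz
  have h_comm : ∀ x ∈ insert T (Set.range U), ∀ y ∈ insert T (Set.range U), x * y = y * x := by
    rintro _ (rfl | ⟨r, rfl⟩) _ (rfl | ⟨s, rfl⟩)
    · rfl
    · exact h.commute_orbit s
    · exact (h.commute_orbit r).symm
    · rw [← U.map_add_eq_mul, ← U.map_add_eq_mul, add_comm]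
  obtain ⟨L, rfl, hL_one, hL_mul⟩ := exists_dual_of_mem_spectrum h_comm (Set.mem_insert T _) hz
  have hT_mem : T ∈ Algebra.adjoin ℂ (insert T (Set.range U)) :=
    Algebra.subset_adjoin (Set.mem_insert T _)
  have hU_mem (r : ℝ) : U r ∈ Algebra.adjoin ℂ (insert T (Set.range U)) :=
    Algebra.subset_adjoin (Set.mem_insert_of_mem T ⟨r, rfl⟩)
  by_cases hT : L T = 0
  · exact hT ▸ zero_mem_closure_range_fourier k
  · exact subset_closure <| h.apply_mem_range_fourier hL_one
      (fun r s => hL_mul _ (hU_mem r) _ (hU_mem s)) (fun r => hL_mul _ (hU_mem r) _ hT_mem)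
      (hL_mul _ hT_mem _ hT_mem) hT

theorem apply_sub_fourier_smul (h : IsIntegratedForm U M k T) (w : ℝ) (v : E) :
    T v - 𝓕 k w • v = ∫ s, k s • (U s v - 𝐞 (-(s * w)) • v) := by
  have h_int : Integrable fun s => k s • 𝐞 (-(s * w)) • v :=
    h.integrable_kernel.smul_bdd ‖v‖ (by fun_prop) (.of_forall fun s => by simp)
  simp_rw [smul_sub]
  rw [integral_sub (h.integrable_smul_orbit h.integrable_kernel v) h_int, h.apply_eq_integral,
    Real.fourier_real_eq, ← integral_smul_const]
  simp_rw [Circle.smul_def, smul_smul, smul_eq_mul, mul_comm]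

theorem tendsto_apply_sub_fourier_smul (h : IsIntegratedForm U M k T) {ι : Type*} {l : Filter ι}
    [l.IsCountablyGenerated] {v : ι → E} {w : ℝ} (hv : ∀ i, ‖v i‖ = 1)
    (hUv : ∀ s, Tendsto (fun i => U s (v i) - 𝐞 (-(s * w)) • v i) l (𝓝 0)) :
    Tendsto (fun i => T (v i) - 𝓕 k w • v i) l (𝓝 0) := by
  simp_rw [h.apply_sub_fourier_smul]
  rw [← integral_zero ℝ E]
  refine tendsto_integral_filter_of_dominated_convergence (fun s => ‖k s‖ * (M + 1))
    (.of_forall fun i => ?_) (.of_forall fun i => .of_forall fun s => ?_)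
    (h.integrable_kernel.norm.mul_const _) (.of_forall fun s => ?_)
  · exact h.integrable_kernel.aestronglyMeasurable.smul
      ((h.aestronglyMeasurable_orbit (v i)).sub (by fun_prop))
  · rw [norm_smul]
    gcongr
    refine (norm_sub_le _ _).trans (add_le_add ?_ ?_)
    · simpa [hv i] using h.norm_apply_le s (v i)
    · rw [Circle.norm_smul, hv i]
  · simpa using (hUv s).const_smul (k s)

theorem fourier_mem_spectrum (h : IsIntegratedForm U M k T) {ι : Type*} {l : Filter ι}
    [l.IsCountablyGenerated] [l.NeBot] {v : ι → E} {w : ℝ} (hv : ∀ i, ‖v i‖ = 1)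
    (hUv : ∀ s, Tendsto (fun i => U s (v i) - 𝐞 (-(s * w)) • v i) l (𝓝 0)) :
    𝓕 k w ∈ spectrum ℂ T := by
  intro h_unit
  obtain ⟨B, hB⟩ := h_unit.exists_left_inv
  have h_lim : Tendsto (fun i => B (𝓕 k w • v i - T (v i))) l (𝓝 0) := by
    have h_sub := (h.tendsto_apply_sub_fourier_smul hv hUv).neg
    simp_rw [neg_sub, neg_zero] at h_sub
    exact (B.continuous.tendsto' 0 0 (map_zero B)).comp h_sub
  have h_eq (i : ι) : B (𝓕 k w • v i - T (v i)) = v i := by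
    simpa [mul_apply_eq_comp, Algebra.algebraMap_eq_smul_one] using congr($hB (v i))
  have h_norm : Tendsto (fun _ : ι => (1 : ℝ)) l (𝓝 0) := by
    simpa [h_eq, hv] using h_lim.norm
  exact one_ne_zero (tendsto_nhds_unique tendsto_const_nhds h_norm)

theorem spectrum_eq_closure_range_fourier (h : IsIntegratedForm U M k T) {ι : Type*} {l : Filter ι}
    [l.IsCountablyGenerated] [l.NeBot] {v : ℝ → ι → E} (hv : ∀ w i, ‖v w i‖ = 1)
    (hUv : ∀ w s, Tendsto (fun i => U s (v w i) - 𝐞 (-(s * w)) • v w i) l (𝓝 0)) :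
    spectrum ℂ T = closure (Set.range (𝓕 k)) := by
  refine h.spectrum_subset.antisymm (closure_minimal ?_ (spectrum.isClosed T))
  rintro _ ⟨w, rfl⟩
  exact h.fourier_mem_spectrum (hv w) (hUv w)

end IsIntegratedForm

end IntegratedForm

section LpValued

variable {X Ω E : Type*} [MeasurableSpace X] [MeasurableSpace Ω] [NormedAddCommGroup E]
  {p : ℝ≥0∞} {μ : Measure X} {ν : Measure Ω}

theorem measurable_of_measurable_dist {Y : Type*} [PseudoMetricSpace Y] [SecondCountableTopology Y]
    [MeasurableSpace Y] [BorelSpace Y] {F : Ω → Y} (hF : ∀ y, Measurable fun ω => dist (F ω) y) :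
    Measurable F := by
  refine measurable_of_isOpen fun O hO => ?_
  choose! r hr_pos hr_sub using Metric.isOpen_iff.1 hO
  obtain ⟨C, -, hC_count, hC⟩ := TopologicalSpace.isOpen_biUnion_countable O
    (fun y => Metric.ball y (r y)) fun _ _ => Metric.isOpen_ball
  have hO_eq : O = ⋃ y ∈ C, Metric.ball y (r y) := by
    rw [hC]
    exact Set.Subset.antisymm (fun y hy => Set.mem_biUnion hy (Metric.mem_ball_self (hr_pos y hy)))
      (Set.iUnion₂_subset hr_sub)
  rw [hO_eq, Set.preimage_iUnion₂]
  exact .biUnion hC_count fun y _ => hF y measurableSet_Iio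

theorem Lp_stronglyMeasurable_of_ae_eq [Fact (1 ≤ p)] [Fact (p ≠ ∞)] [SFinite μ]
    [MeasurableSpace.CountablyGenerated X] [TopologicalSpace.SeparableSpace E] {F : Ω → Lp E p μ}
    {f : Ω → X → E} (hf : StronglyMeasurable f.uncurry) (hFf : ∀ ω, F ω =ᵐ[μ] f ω) :
    StronglyMeasurable F := by
  have hp_zero : p ≠ 0 := (one_pos.trans_le Fact.out).ne'
  borelize ↥(Lp E p μ)
  refine (measurable_of_measurable_dist fun g => ?_).stronglyMeasurable
  have h_dist (ω : Ω) :
      dist (F ω) g = ((∫⁻ x, ‖f ω x - g x‖ₑ ^ p.toReal ∂μ) ^ (1 / p.toReal)).toReal := by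
    rw [Lp.dist_def, ← eLpNorm_eq_lintegral_rpow_enorm_toReal hp_zero Fact.out]
    refine congrArg _ (eLpNorm_congr_ae ?_)
    filter_upwards [hFf ω] with x hx
    simp [hx]
  have h_meas : Measurable fun z : Ω × X => ‖f z.1 z.2 - g z.2‖ₑ ^ p.toReal :=
    (hf.sub ((Lp.stronglyMeasurable g).comp_measurable measurable_snd)).enorm.pow_const _
  simp_rw [h_dist]
  exact (h_meas.lintegral_prod_right'.pow_const _).ennreal_toReal

theorem lpPairing_indicatorConstLp (p q : ℝ≥0∞) [Fact (1 ≤ p)] [Fact (1 ≤ q)]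
    [q.HolderConjugate p] [NormedSpace ℝ E] [CompleteSpace E] {s : Set X} (hs : MeasurableSet s)
    (hμs : μ s ≠ ∞) (f : Lp E p μ) :
    (ContinuousLinearMap.lsmul ℝ ℝ).lpPairing μ q p (indicatorConstLp q hs hμs (1 : ℝ)) f =
      ∫ x in s, f x ∂μ := by
  rw [ContinuousLinearMap.lpPairing_eq_integral, ← integral_indicator hs]
  refine integral_congr_ae ?_
  filter_upwards [indicatorConstLp_coeFn (p := q) (hs := hs) (hμs := hμs) (c := (1 : ℝ))] with x hx
  by_cases hxs : x ∈ s <;> simp [hx, hxs]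

theorem exists_setIntegral_norm_le [Fact (1 ≤ p)] {s : Set X} (hs : MeasurableSet s)
    (hμs : μ s ≠ ∞) : ∃ C, ∀ f : Lp E p μ, ∫ x in s, ‖f x‖ ∂μ ≤ C * ‖f‖ := by
  let q := p.conjExponent
  have : q.HolderConjugate p := .symm
  have : Fact (1 ≤ q) := ⟨ENNReal.HolderConjugate.one_le q p⟩
  let ℓ := (ContinuousLinearMap.lsmul ℝ ℝ (E := ℝ)).lpPairing μ q p
    (indicatorConstLp q hs hμs (1 : ℝ))
  refine ⟨‖ℓ‖, fun f => ?_⟩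
  let g : Lp ℝ p μ := (Lp.memLp f).norm.toLp
  have hg : g =ᵐ[μ] fun x => ‖f x‖ := (Lp.memLp f).norm.coeFn_toLp
  calc ∫ x in s, ‖f x‖ ∂μ
      = ℓ g := by
        rw [lpPairing_indicatorConstLp]
        exact integral_congr_ae (ae_restrict_of_ae hg.symm)
    _ ≤ ‖ℓ‖ * ‖g‖ := (le_abs_self _).trans (ℓ.le_opNorm g)
    _ ≤ ‖ℓ‖ * ‖f‖ := by
        gcongr
        exact Lp.norm_le_norm_of_ae_le (hg.mono fun x hx => by simp [hx])

theorem integrable_prod_of_Lp_ae_eq [Fact (1 ≤ p)] [SFinite μ] [SFinite ν] {F : Ω → Lp E p μ}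
    (hF : Integrable F ν) {f : X × Ω → E} (hf : StronglyMeasurable f)
    (hFf : ∀ ω, F ω =ᵐ[μ] fun x => f (x, ω)) {s : Set X} (hs : MeasurableSet s) (hμs : μ s ≠ ∞) :
    Integrable f ((μ.restrict s).prod ν) := by
  obtain ⟨C, hC⟩ := exists_setIntegral_norm_le (E := E) (p := p) hs hμs
  refine (integrable_prod_iff' hf.aestronglyMeasurable).2 ⟨.of_forall fun ω => ?_, ?_⟩
  · exact (integrableOn_Lp_of_measure_ne_top (F ω) Fact.out hμs).congr
      (ae_restrict_of_ae (hFf ω))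
  · refine (hF.norm.const_mul C).mono'
      hf.norm.integral_prod_left'.aestronglyMeasurable (.of_forall fun ω => ?_)
    rw [Real.norm_of_nonneg (by positivity)]
    refine (integral_congr_ae (ae_restrict_of_ae ?_)).trans_le (hC (F ω))
    filter_upwards [hFf ω] with x hx
    rw [hx]

theorem Lp_integral_ae_eq [NormedSpace ℝ E] [CompleteSpace E] [Fact (1 ≤ p)] [SigmaFinite μ]
    [SFinite ν] {F : Ω → Lp E p μ} (hF : Integrable F ν) {f : X × Ω → E} (hf : StronglyMeasurable f)
    (hFf : ∀ ω, F ω =ᵐ[μ] fun x => f (x, ω)) :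
    ⇑(∫ ω, F ω ∂ν) =ᵐ[μ] fun x => ∫ ω, f (x, ω) ∂ν := by
  let q := p.conjExponent
  have : q.HolderConjugate p := .symm
  have : Fact (1 ≤ q) := ⟨ENNReal.HolderConjugate.one_le q p⟩
  refine ae_eq_of_forall_setIntegral_eq_of_sigmaFinite (fun s _ hμs => ?_) (fun s hs hμs => ?_)
    fun s hs hμs => ?_
  · exact integrableOn_Lp_of_measure_ne_top _ Fact.out hμs.ne
  · exact (integrable_prod_of_Lp_ae_eq hF hf hFf hs hμs.ne).integral_prod_left
  · rw [← lpPairing_indicatorConstLp p q hs hμs.ne, ← ContinuousLinearMap.integral_comp_comm _ hF,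
      integral_integral_swap (f := fun x ω => f (x, ω))
        (integrable_prod_of_Lp_ae_eq hF hf hFf hs hμs.ne)]
    simp_rw [lpPairing_indicatorConstLp]
    exact integral_congr_ae (.of_forall fun ω => integral_congr_ae (ae_restrict_of_ae (hFf ω)))

end LpValued

section Weight

instance (a : ℝ) : SigmaFinite (weightMeasure a) :=
  SigmaFinite.withDensity_of_ne_top' fun _ => ENNReal.ofReal_ne_top

theorem ae_weightMeasure_ne_zero (a : ℝ) : ∀ᵐ x ∂weightMeasure a, x ≠ 0 :=
  withDensity_absolutelyContinuous _ _ (Measure.ae_ne volume 0)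

theorem weightMeasure_ne_zero (a : ℝ) : weightMeasure a ≠ 0 := by
  have h_pos : ∀ᵐ x : ℝ, ENNReal.ofReal (|x| ^ a) ≠ 0 := by
    filter_upwards [Measure.ae_ne volume 0] with x hx
    simpa using rpow_pos_of_pos (abs_pos.2 hx) a
  intro h
  have h_vol : (volume : Measure ℝ) ≪ weightMeasure a :=
    withDensity_absolutelyContinuous' (by fun_prop) h_pos
  exact NeZero.ne (volume : Measure ℝ) (Measure.absolutelyContinuous_zero_iff.1 (h ▸ h_vol))

theorem map_mul_left_weightMeasure (a : ℝ) {r : ℝ} (hr : r ≠ 0) :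
    (weightMeasure a).map (r * ·) = ENNReal.ofReal (|r| ^ (-(a + 1))) • weightMeasure a := by
  let w : ℝ → ℝ≥0∞ := fun x => ENNReal.ofReal (|x| ^ a)
  have hw : Measurable w := by fun_prop
  have h_homogeneous : w = ENNReal.ofReal (|r| ^ (-a)) • (w ∘ (r * ·)) := by
    ext x
    simp only [w, Pi.smul_apply, Function.comp_apply, smul_eq_mul]
    rw [← ENNReal.ofReal_mul (by positivity), abs_mul, mul_rpow (abs_nonneg _) (abs_nonneg _),
      ← mul_assoc, ← rpow_add (abs_pos.2 hr), neg_add_cancel, rpow_zero, one_mul]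
  calc (weightMeasure a).map (r * ·)
      = ENNReal.ofReal (|r| ^ (-a)) • (volume.map (r * ·)).withDensity w := by
        rw [← map_withDensity_comp (by fun_prop) hw, ← Measure.map_smul,
          ← withDensity_smul _ (by fun_prop), ← h_homogeneous, weightMeasure]
    _ = ENNReal.ofReal (|r| ^ (-(a + 1))) • weightMeasure a := by
        rw [Real.map_volume_mul_left hr, withDensity_smul_measure, smul_smul,
          ← ENNReal.ofReal_mul (by positivity), abs_inv, ← rpow_neg_one,
          ← rpow_add (abs_pos.2 hr), neg_add, weightMeasure]

theorem quasiMeasurePreserving_mul_left_weightMeasure (a : ℝ) {r : ℝ} (hr : r ≠ 0) :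
    Measure.QuasiMeasurePreserving (r * ·) (weightMeasure a) (weightMeasure a) :=
  ⟨by fun_prop, map_mul_left_weightMeasure a hr ▸ Measure.smul_absolutelyContinuous⟩

end Weight

section Dilate

variable {f : ℝ → ℂ}

/-- The isometric dilation `f ↦ e^{cs} f(e^s ·)`, where `c = (a + 1) / p` on `L^p(|x|^a)`. -/
noncomputable def dilate (c s : ℝ) (f : ℝ → ℂ) (x : ℝ) : ℂ :=
  rexp (c * s) • f (rexp s * x)

theorem stronglyMeasurable_uncurry_dilate (c : ℝ) (hf : StronglyMeasurable f) :
    StronglyMeasurable (fun s => dilate c s f).uncurry := by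
  have := hf.measurable
  unfold dilate Function.uncurry
  fun_prop

theorem dilate_add (c s : ℝ) (f g : ℝ → ℂ) : dilate c s (f + g) = dilate c s f + dilate c s g := by
  ext x
  exact smul_add ..

theorem dilate_smul (c s : ℝ) (z : ℂ) (f : ℝ → ℂ) : dilate c s (z • f) = z • dilate c s f := by
  ext x
  exact smul_comm (rexp (c * s)) z (f (rexp s * x))

theorem dilate_zero (c : ℝ) (f : ℝ → ℂ) : dilate c 0 f = f := by
  ext x
  simp [dilate]

theorem dilate_dilate (c s t : ℝ) (f : ℝ → ℂ) :
    dilate c s (dilate c t f) = dilate c (s + t) f := by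
  ext x
  simp only [dilate, smul_smul, ← mul_assoc, ← Real.exp_add, ← mul_add, add_comm t]

theorem dilate_ae_eq (c s a : ℝ) {f g : ℝ → ℂ} (hfg : f =ᵐ[weightMeasure a] g) :
    dilate c s f =ᵐ[weightMeasure a] dilate c s g := by
  filter_upwards [(quasiMeasurePreserving_mul_left_weightMeasure a (exp_ne_zero s)).ae_eq_comp hfg]
    with x hx
  exact congrArg (rexp (c * s) • ·) hx

theorem eLpNorm_dilate (a s : ℝ) (p : ℝ≥0∞) (hf : AEStronglyMeasurable f (weightMeasure a)) :
    eLpNorm (dilate ((a + 1) / p.toReal) s f) p (weightMeasure a) =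
      eLpNorm f p (weightMeasure a) := by
  have h_map := map_mul_left_weightMeasure a (exp_ne_zero s)
  calc eLpNorm (dilate ((a + 1) / p.toReal) s f) p (weightMeasure a)
      = ENNReal.ofReal (rexp ((a + 1) / p.toReal * s)) *
          eLpNorm f p ((weightMeasure a).map (rexp s * ·)) := by
        rw [eLpNorm_map_measure (h_map ▸ hf.smul_measure _) (by fun_prop),
          ← Real.enorm_of_nonneg (exp_nonneg _), ← eLpNorm_const_smul]
        rfl
    _ = eLpNorm f p (weightMeasure a) := by
        have h_pos : 0 < |rexp s| ^ (-(a + 1)) := by positivity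
        rw [h_map, eLpNorm_smul_measure_of_ne_zero (by simpa using h_pos), smul_eq_mul, ← mul_assoc,
          ENNReal.ofReal_rpow_of_pos h_pos, ← ENNReal.ofReal_mul (by positivity), Real.abs_exp,
          ← exp_mul, ← exp_mul, ← Real.exp_add, ENNReal.toReal_div, ENNReal.toReal_one]
        convert one_mul _
        rw [ENNReal.ofReal_eq_one, exp_eq_one_iff]
        ring

end Dilate

section Kernel

variable {φ : ℝ → ℂ} {c : ℝ}

/-- The paper's kernel `k_{a,p}(s) = e^{cs} φ(e^s)`, `c = (a + 1) / p`, reflected at the origin so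
that its Fourier transform is the Mellin transform of `φ` on the line `re = c`. -/
noncomputable def hausdorffKernel (φ : ℝ → ℂ) (c s : ℝ) : ℂ :=
  rexp (-c * s) • φ (rexp (-s))

theorem measurable_hausdorffKernel (c : ℝ) (hφm : Measurable φ) :
    Measurable (hausdorffKernel φ c) := by
  unfold hausdorffKernel
  fun_prop

theorem integrable_hausdorffKernel (hφm : Measurable φ)
    (hφ : IntegrableOn (fun t => ‖φ t‖ * t ^ (c - 1)) (Set.Ioi 0)) :
    Integrable (hausdorffKernel φ c) := by
  refine (integrable_norm_iff (measurable_hausdorffKernel c hφm).aestronglyMeasurable).1 ?_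
  refine (integrable_exp_smul_comp_exp_iff.2 hφ).comp_neg.congr (.of_forall fun s => ?_)
  simp only [hausdorffKernel, norm_smul, Real.norm_of_nonneg (exp_pos _).le, ← exp_mul, smul_eq_mul]
  rw [mul_left_comm, ← Real.exp_add, mul_comm]
  ring_nf

theorem khat_eq_fourier (φ : ℝ → ℂ) (c ξ : ℝ) :
    khat φ c ξ = 𝓕 (hausdorffKernel φ c) (-ξ / (2 * π)) := by
  have h := mellin_eq_fourier φ (s := c - Complex.I * ξ)
  simp only [Complex.sub_re, Complex.sub_im, Complex.ofReal_re, Complex.ofReal_im, Complex.mul_re,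
    Complex.mul_im, Complex.I_re, Complex.I_im, zero_mul, one_mul, mul_zero, zero_sub, sub_zero,
    zero_add] at h
  unfold hausdorffKernel
  rw [← h]
  simp only [khat, mellin, smul_eq_mul, mul_comm (φ _), sub_right_comm]

theorem range_khat (φ : ℝ → ℂ) (c : ℝ) :
    Set.range (khat φ c) = Set.range (𝓕 (hausdorffKernel φ c)) := by
  have h_surj : Function.Surjective fun ξ : ℝ => -ξ / (2 * π) := fun w =>
    ⟨-(w * (2 * π)), by field_simp⟩
  rw [← h_surj.range_comp (𝓕 (hausdorffKernel φ c))]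
  exact congrArg Set.range (funext (khat_eq_fourier φ c))

theorem Hphi_eq_integral_dilate (φ f : ℝ → ℂ) (c x : ℝ) :
    Hphi φ f x = ∫ s, hausdorffKernel φ c s • dilate c s f x := by
  calc Hphi φ f x
      = mellin (fun t => f (x / t) * φ t) 0 := by
        simp only [Hphi, mellin, zero_sub, Complex.cpow_neg_one, smul_eq_mul, div_eq_inv_mul]
    _ = ∫ s, f (x / rexp (-s)) * φ (rexp (-s)) := by
        simp [mellin_eq_fourier, Real.fourier_eq']
    _ = ∫ s, hausdorffKernel φ c s • dilate c s f x := by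
        refine integral_congr_ae (.of_forall fun s => ?_)
        simp only [hausdorffKernel, dilate, smul_mul_smul_comm, smul_eq_mul, ← Real.exp_add]
        rw [neg_mul, neg_add_cancel, Real.exp_zero, one_smul, Real.exp_neg, div_inv_eq_mul,
          mul_comm x, mul_comm]

end Kernel

section Group

variable {a : ℝ} {p : ℝ≥0∞}

theorem eLpNorm_dilate_Lp (s : ℝ) (f : Lp ℂ p (weightMeasure a)) :
    eLpNorm (dilate ((a + 1) / p.toReal) s f) p (weightMeasure a) =
      eLpNorm f p (weightMeasure a) :=
  eLpNorm_dilate a s p (Lp.aestronglyMeasurable f)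

theorem memLp_dilate_Lp (s : ℝ) (f : Lp ℂ p (weightMeasure a)) :
    MemLp (dilate ((a + 1) / p.toReal) s f) p (weightMeasure a) :=
  ⟨((stronglyMeasurable_uncurry_dilate _ (Lp.stronglyMeasurable f)).comp_measurable
    (measurable_prodMk_left (x := s))).aestronglyMeasurable,
    (eLpNorm_dilate_Lp s f).trans_lt (Lp.eLpNorm_lt_top f)⟩

variable [Fact (1 ≤ p)]

/-- The isometry of `L^p(|x|^a)` induced by `dilate`. -/
noncomputable def dilateLp (a : ℝ) (p : ℝ≥0∞) [Fact (1 ≤ p)] (s : ℝ) :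
    Lp ℂ p (weightMeasure a) →ₗᵢ[ℂ] Lp ℂ p (weightMeasure a) where
  toFun f := (memLp_dilate_Lp s f).toLp
  map_add' f g := by
    rw [← MemLp.toLp_add]
    refine MemLp.toLp_congr _ _ ?_
    rw [← dilate_add]
    exact dilate_ae_eq _ _ _ (Lp.coeFn_add f g)
  map_smul' z f := by
    rw [RingHom.id_apply, ← MemLp.toLp_const_smul]
    refine MemLp.toLp_congr _ _ ?_
    rw [← dilate_smul]
    exact dilate_ae_eq _ _ _ (Lp.coeFn_smul z f)
  norm_map' f := by
    simp only [LinearMap.coe_mk, AddHom.coe_mk]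
    rw [Lp.norm_toLp, eLpNorm_dilate_Lp, Lp.norm_def]

theorem dilateLp_ae_eq (s : ℝ) (f : Lp ℂ p (weightMeasure a)) :
    dilateLp a p s f =ᵐ[weightMeasure a] dilate ((a + 1) / p.toReal) s f :=
  (memLp_dilate_Lp s f).coeFn_toLp

/-- The representation of `ℝ` on `L^p(|x|^a)` by the isometric dilations `dilate`. -/
noncomputable def dilationGroup (a : ℝ) (p : ℝ≥0∞) [Fact (1 ≤ p)] :
    AddChar ℝ (Lp ℂ p (weightMeasure a) →L[ℂ] Lp ℂ p (weightMeasure a)) where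
  toFun s := (dilateLp a p s).toContinuousLinearMap
  map_zero_eq_one' := by
    ext1 f
    refine Lp.ext ((dilateLp_ae_eq 0 f).trans ?_)
    rw [dilate_zero]
    rfl
  map_add_eq_mul' s t := by
    ext1 f
    refine Lp.ext ((dilateLp_ae_eq (s + t) f).trans ?_)
    rw [← dilate_dilate]
    exact ((dilateLp_ae_eq s _).trans (dilate_ae_eq _ s a (dilateLp_ae_eq t f))).symm

theorem dilationGroup_ae_eq (s : ℝ) (f : Lp ℂ p (weightMeasure a)) :
    dilationGroup a p s f =ᵐ[weightMeasure a] dilate ((a + 1) / p.toReal) s f :=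
  dilateLp_ae_eq s f

variable [Fact (p ≠ ∞)]

theorem stronglyMeasurable_dilationGroup (f : Lp ℂ p (weightMeasure a)) :
    StronglyMeasurable fun s => dilationGroup a p s f :=
  Lp_stronglyMeasurable_of_ae_eq
    (stronglyMeasurable_uncurry_dilate _ (Lp.stronglyMeasurable f)) fun s => dilationGroup_ae_eq s f

theorem integral_smul_dilationGroup_ae_eq {k : ℝ → ℂ} (hk_meas : Measurable k)
    (hk : Integrable k) (f : Lp ℂ p (weightMeasure a)) :
    ⇑(∫ s, k s • dilationGroup a p s f) =ᵐ[weightMeasure a]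
      fun x => ∫ s, k s • dilate ((a + 1) / p.toReal) s f x := by
  have h_int : Integrable fun s => k s • dilationGroup a p s f :=
    hk.smul_bdd ‖f‖ (stronglyMeasurable_dilationGroup f).aestronglyMeasurable
      (.of_forall fun s => ((dilateLp a p s).norm_map f).le)
  have h_meas := (stronglyMeasurable_uncurry_dilate ((a + 1) / p.toReal)
    (Lp.stronglyMeasurable f)).comp_measurable measurable_swap
  refine Lp_integral_ae_eq h_int (f := fun z => k z.2 • dilate ((a + 1) / p.toReal) z.2 f z.1)
    ((hk_meas.comp measurable_snd).stronglyMeasurable.smul h_meas) fun s => ?_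
  filter_upwards [Lp.coeFn_smul (k s) (dilationGroup a p s f), dilationGroup_ae_eq s f]
    with x hx_smul hx
  rw [hx_smul, Pi.smul_apply, hx]

theorem isIntegratedForm_dilationGroup {φ : ℝ → ℂ} (hφm : Measurable φ)
    (hφ : IntegrableOn (fun t => ‖φ t‖ * t ^ ((a + 1) / p.toReal - 1)) (Set.Ioi 0))
    {T : Lp ℂ p (weightMeasure a) →L[ℂ] Lp ℂ p (weightMeasure a)}
    (hT : ∀ f, T f =ᵐ[weightMeasure a] Hphi φ f) :
    IsIntegratedForm (dilationGroup a p) 1 (hausdorffKernel φ ((a + 1) / p.toReal)) T where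
  norm_le s := (dilateLp a p s).norm_toContinuousLinearMap_le
  aestronglyMeasurable_orbit f := (stronglyMeasurable_dilationGroup f).aestronglyMeasurable
  integrable_kernel := integrable_hausdorffKernel hφm hφ
  apply_eq_integral f := by
    refine Lp.ext ((hT f).trans ?_)
    rw [funext (Hphi_eq_integral_dilate φ f ((a + 1) / p.toReal))]
    exact (integral_smul_dilationGroup_ae_eq (measurable_hausdorffKernel _ hφm)
      (integrable_hausdorffKernel hφm hφ) f).symm

end Group

section ApproxEigen

/-- The generalized eigenfunction `|x|^{-c - 2πiw}` of the dilations, damped by `e^{-δ |log |x||}`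
so that it lies in `L^p(|x|^a)` when `c = (a + 1) / p`. -/
noncomputable def approxEigenfun (c w δ x : ℝ) : ℂ :=
  rexp (-(c * log x) - δ * |log x|) • (𝐞 (-(w * log x)) : ℂ)

variable {δ : ℝ}

theorem norm_approxEigenfun (c w δ x : ℝ) :
    ‖approxEigenfun c w δ x‖ = rexp (-(c * log x) - δ * |log x|) := by
  rw [approxEigenfun, norm_smul, Circle.norm_coe, mul_one, Real.norm_of_nonneg (exp_nonneg _)]

theorem measurable_approxEigenfun (c w δ : ℝ) : Measurable (approxEigenfun c w δ) := by
  unfold approxEigenfun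
  have := Real.measurable_log
  have : Continuous fun x : ℝ => (𝐞 x : ℂ) := by fun_prop
  fun_prop

theorem dilate_approxEigenfun (c w δ s : ℝ) {x : ℝ} (hx : x ≠ 0) :
    dilate c s (approxEigenfun c w δ) x = rexp (-(c * log x) - δ * |s + log x|) •
      (𝐞 (-(s * w)) * 𝐞 (-(w * log x)) : ℂ) := by
  have h_log : log (rexp s * x) = s + log x := by rw [log_mul (exp_ne_zero s) hx, log_exp]
  have h_char : 𝐞 (-(w * (s + log x))) = 𝐞 (-(s * w)) * 𝐞 (-(w * log x)) := by
    rw [← AddChar.map_add_eq_mul]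
    ring_nf
  rw [dilate, approxEigenfun, h_log, h_char, Circle.coe_mul, smul_smul, ← Real.exp_add]
  ring_nf

theorem norm_dilate_approxEigenfun_sub_le (c w s : ℝ) (hδ : 0 ≤ δ) {x : ℝ} (hx : x ≠ 0) :
    ‖dilate c s (approxEigenfun c w δ) x - 𝐞 (-(s * w)) • approxEigenfun c w δ x‖ ≤
      (rexp (δ * |s|) - 1) * ‖approxEigenfun c w δ x‖ := by
  have h_eq : dilate c s (approxEigenfun c w δ) x - 𝐞 (-(s * w)) • approxEigenfun c w δ x =
      (rexp (-(c * log x) - δ * |s + log x|) - rexp (-(c * log x) - δ * |log x|)) •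
        (𝐞 (-(s * w)) * 𝐞 (-(w * log x)) : ℂ) := by
    rw [dilate_approxEigenfun c w δ s hx, approxEigenfun, Circle.smul_def, smul_eq_mul,
      mul_smul_comm, sub_smul]
  have h_abs : |-(c * log x) - δ * |s + log x| - (-(c * log x) - δ * |log x|)| ≤ δ * |s| := by
    rw [sub_sub_sub_cancel_left, abs_sub_comm, ← mul_sub, abs_mul, abs_of_nonneg hδ]
    refine mul_le_mul_of_nonneg_left ?_ hδ
    exact (abs_abs_sub_abs_le (s + log x) (log x)).trans_eq (by rw [add_sub_cancel_right])
  rw [h_eq, norm_smul, norm_mul, Circle.norm_coe, Circle.norm_coe, mul_one, mul_one,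
    norm_approxEigenfun]
  refine (abs_exp_sub_exp_le _ _).trans ?_
  gcongr

theorem memLp_approxEigenfun (a w : ℝ) {p : ℝ≥0∞} (hp_zero : p ≠ 0) (hp : p ≠ ∞) (hδ : 0 < δ) :
    MemLp (approxEigenfun ((a + 1) / p.toReal) w δ) p (weightMeasure a) := by
  have hp_pos := ENNReal.toReal_pos hp_zero hp
  rw [← integrable_norm_rpow_iff (measurable_approxEigenfun _ _ _).aestronglyMeasurable hp_zero hp,
    weightMeasure, integrable_withDensity_iff_integrable_smul' (by fun_prop) (by simp)]
  refine (integrable_exp_neg_log_abs_sub (mul_pos hp_pos hδ)).congr ?_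
  filter_upwards [Measure.ae_ne volume 0] with x hx
  rw [ENNReal.toReal_ofReal (by positivity), rpow_def_of_pos (abs_pos.2 hx), norm_approxEigenfun,
    ← exp_mul, smul_eq_mul, ← Real.exp_add, log_abs]
  congr 1
  field_simp
  ring

variable {p : ℝ≥0∞}

/-- `approxEigenfun` as an element of `L^p(|x|^a)`, with damping `δ = 1 / (n + 1)`. -/
noncomputable def approxEigenvector (a : ℝ) {p : ℝ≥0∞} (hp_zero : p ≠ 0) (hp : p ≠ ∞) (w : ℝ)
    (n : ℕ) : Lp ℂ p (weightMeasure a) :=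
  (memLp_approxEigenfun a w hp_zero hp (Nat.one_div_pos_of_nat (n := n))).toLp

theorem approxEigenvector_ae_eq (a : ℝ) (hp_zero : p ≠ 0) (hp : p ≠ ∞) (w : ℝ) (n : ℕ) :
    approxEigenvector a hp_zero hp w n =ᵐ[weightMeasure a]
      approxEigenfun ((a + 1) / p.toReal) w (1 / (n + 1)) :=
  MemLp.coeFn_toLp _

theorem approxEigenvector_ne_zero (a : ℝ) (hp_zero : p ≠ 0) (hp : p ≠ ∞) (w : ℝ) (n : ℕ) :
    approxEigenvector a hp_zero hp w n ≠ 0 := by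
  intro h
  have h_false : ∀ᵐ _ ∂weightMeasure a, False := by
    filter_upwards [approxEigenvector_ae_eq a hp_zero hp w n, Lp.eq_zero_iff_ae_eq_zero.1 h]
      with x hx hx_zero
    have h_norm := norm_approxEigenfun ((a + 1) / p.toReal) w (1 / (n + 1)) x
    rw [← hx, hx_zero, Pi.zero_apply, norm_zero] at h_norm
    exact (exp_pos _).ne h_norm
  exact weightMeasure_ne_zero a (ae_eq_bot.1 (eventually_false_iff_eq_bot.1 h_false))

variable [Fact (1 ≤ p)]

theorem norm_dilationGroup_approxEigenvector_sub_le (a : ℝ) (hp_zero : p ≠ 0) (hp : p ≠ ∞)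
    (w s : ℝ) (n : ℕ) :
    ‖dilationGroup a p s (approxEigenvector a hp_zero hp w n) -
        𝐞 (-(s * w)) • approxEigenvector a hp_zero hp w n‖ ≤
      (rexp (1 / (n + 1) * |s|) - 1) * ‖approxEigenvector a hp_zero hp w n‖ := by
  set G := approxEigenvector a hp_zero hp w n
  have hG : G =ᵐ[weightMeasure a] approxEigenfun ((a + 1) / p.toReal) w (1 / (n + 1)) :=
    approxEigenvector_ae_eq a hp_zero hp w n
  refine Lp.norm_le_mul_norm_of_ae_le_mul ?_
  filter_upwards [ae_weightMeasure_ne_zero a, hG, dilationGroup_ae_eq s G,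
    dilate_ae_eq ((a + 1) / p.toReal) s a hG, Lp.coeFn_sub (dilationGroup a p s G)
    (𝐞 (-(s * w)) • G), Lp.coeFn_smul (𝐞 (-(s * w)) : ℂ) G] with x hx hGx hUx hdx h_sub h_smul
  rw [h_sub, Pi.sub_apply, hUx, hdx, Circle.smul_def, h_smul, Pi.smul_apply, hGx]
  exact norm_dilate_approxEigenfun_sub_le _ w s (by positivity) hx

theorem exists_unit_approxEigenvectors (a : ℝ) (hp : p ≠ ∞) (w : ℝ) :
    ∃ v : ℕ → Lp ℂ p (weightMeasure a), (∀ n, ‖v n‖ = 1) ∧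
      ∀ s, Tendsto (fun n => dilationGroup a p s (v n) - 𝐞 (-(s * w)) • v n) atTop (𝓝 0) := by
  have hp_zero : p ≠ 0 := (one_pos.trans_le Fact.out).ne'
  let G := approxEigenvector a hp_zero hp w
  have hG (n : ℕ) : ‖G n‖ ≠ 0 := norm_ne_zero_iff.2 (approxEigenvector_ne_zero a hp_zero hp w n)
  refine ⟨fun n => (‖G n‖⁻¹ : ℂ) • G n, fun n => ?_, fun s => ?_⟩
  · rw [norm_smul, norm_inv, Complex.norm_real, norm_norm, inv_mul_cancel₀ (hG n)]
  have h_lim : Tendsto (fun n : ℕ => rexp (1 / ((n : ℝ) + 1) * |s|) - 1) atTop (𝓝 0) := by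
    have h := (tendsto_one_div_add_atTop_nhds_zero_nat (𝕜 := ℝ)).mul_const |s|
    simpa using (Real.continuous_exp.tendsto _).comp h |>.sub_const 1
  refine squeeze_zero_norm (fun n => ?_) h_lim
  rw [map_smul, smul_comm, ← smul_sub, norm_smul, norm_inv, Complex.norm_real, norm_norm,
    inv_mul_le_iff₀ ((norm_nonneg _).lt_of_ne' (hG n)), mul_comm ‖G n‖]
  exact norm_dilationGroup_approxEigenvector_sub_le a hp_zero hp w s n

theorem stmt6_general (a : ℝ) (hp : p ≠ ∞) {φ : ℝ → ℂ} (hφm : Measurable φ)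
    (hφ : IntegrableOn (fun t => ‖φ t‖ * t ^ ((a + 1) / p.toReal - 1)) (Set.Ioi 0))
    (T : Lp ℂ p (weightMeasure a) →L[ℂ] Lp ℂ p (weightMeasure a))
    (hT : ∀ f, T f =ᵐ[weightMeasure a] Hphi φ f) :
    spectrum ℂ T = closure (Set.range (khat φ ((a + 1) / p.toReal))) := by
  have : Fact (p ≠ ∞) := ⟨hp⟩
  choose v hv hUv using exists_unit_approxEigenvectors a hp
  rw [range_khat]
  exact (isIntegratedForm_dilationGroup hφm hφ hT).spectrum_eq_closure_range_fourier hv hUv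

end ApproxEigen

end

/-- For `1 ≤ p < ∞`, `a > −1` and `φ` measurable with
`∫₀^∞ |φ(t)| t^{(a+1)/p − 1} dt < ∞`, the spectrum of the induced bounded operator
`T f = H_φ f` on `L^p(ℝ, |x|^a)` equals the closure of `{ k̂_{a,p}(ξ) : ξ ∈ ℝ }`. -/
theorem stmt6 (p a : ℝ) (hp : 1 ≤ p) (ha : -1 < a) [Fact (1 ≤ ENNReal.ofReal p)]
    (φ : ℝ → ℂ) (hφm : Measurable φ)
    (hφ : IntegrableOn (fun t => ‖φ t‖ * t ^ ((a + 1) / p - 1)) (Set.Ioi (0 : ℝ)))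
    (T : Lp ℂ (ENNReal.ofReal p) (weightMeasure a) →L[ℂ]
         Lp ℂ (ENNReal.ofReal p) (weightMeasure a))
    (hT : ∀ f : Lp ℂ (ENNReal.ofReal p) (weightMeasure a),
      ⇑(T f) =ᵐ[weightMeasure a] Hphi φ ⇑f) :
    spectrum ℂ T = closure (Set.range (khat φ ((a + 1) / p))) := by
  have hp_toReal : (ENNReal.ofReal p).toReal = p := ENNReal.toReal_ofReal (by linarith)
  simpa only [hp_toReal] using
    stmt6_general a ENNReal.ofReal_ne_top hφm (by rwa [hp_toReal]) T hT
end

section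
/- Let a > −1 and let φ : (0,∞) → ℂ be measurable with ∫₀^∞ |φ(t)| t^{(a+1)/2 − 1} dt < ∞. Then the operator norm of the Hausdorff operator H_φ on L²(ℝ, |x|^a) equals sup_{ξ ∈ ℝ} |k̂_{a,2}(ξ)|, where k̂_{a,2}(ξ) = ∫₀^∞ φ(t) t^{(a+1)/2 − 1 − iξ} dt. -/
open MeasureTheory

/-!
In the logarithmic coordinates `x = ±e^{-u}`, `L²(ℝ, |x|^a)` splits into two copies of `L²(ℝ, du)`,
and on each of them `H_φ` is the convolution with an integrable function `k`. By Plancherel's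
theorem this convolution is unitarily equivalent to multiplication by the continuous function `𝓕 k`,
which is `k̂_{a,2}` up to a dilation and a reflection. The norm of a multiplication operator by a
continuous function is the supremum of that function, as one sees by testing on bump functions.
Functions in `L²` that are not integrable are reached by truncating to balls and Fatou's lemma.
-/

section Fourier

open ContinuousLinearMap Filter FourierTransform Real Topology
open scoped Convolution ENNReal SchwartzMap

variable {V H : Type*} [NormedAddCommGroup V] [InnerProductSpace ℝ V] [FiniteDimensional ℝ V]
  [MeasurableSpace V] [BorelSpace V] [NormedAddCommGroup H] [InnerProductSpace ℂ H]

theorem continuous_fourier_of_integrable {F : V → H} (hF : Integrable F) : Continuous (𝓕 F) :=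
  VectorFourier.fourierIntegral_continuous continuous_fourierChar continuous_inner hF

variable [CompleteSpace H]

theorem ae_eq_iff_forall_integral_schwartz_smul_eq {E : Type*} [NormedAddCommGroup E]
    [NormedSpace ℂ E] [CompleteSpace E] {μ : Measure V} {f g : V → E}
    (hf : LocallyIntegrable f μ) (hg : LocallyIntegrable g μ) :
    f =ᵐ[μ] g ↔ ∀ S : 𝓢(V, ℂ), ∫ x, S x • f x ∂μ = ∫ x, S x • g x ∂μ := by
  refine ⟨fun h S ↦ integral_congr_ae (h.mono fun x hx ↦ by simp only [hx]), fun h ↦ ?_⟩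
  refine ae_eq_of_integral_contDiff_smul_eq hf hg fun b hb hbc ↦ ?_
  have hbc' : HasCompactSupport (Complex.ofRealCLM ∘ b) := hbc.comp_left (map_zero _)
  simpa using h (hbc'.toSchwartzMap (Complex.ofRealCLM.contDiff.comp hb))

theorem integral_schwartz_smul_fourier_eq (S : 𝓢(V, ℂ)) {F : V → H} (hF : Integrable F) :
    ∫ x, S x • 𝓕 F x = ∫ x, 𝓕 S x • F x := by
  simpa only [flip_innerₗ] using! (VectorFourier.integral_fourierIntegral_smul_eq_flip
    (L := innerₗ V) continuous_fourierChar continuous_inner S.integrable hF).symm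

theorem integral_schwartz_smul_Lp_fourier_eq (S : 𝓢(V, ℂ)) (g : Lp (α := V) H 2) :
    ∫ x, S x • (𝓕 g : Lp (α := V) H 2) x = ∫ x, 𝓕 S x • g x := by
  simpa using congr($(Lp.fourier_toTemperedDistribution_eq g) S).symm

theorem Lp_fourier_ae_eq_iff (g : Lp (α := V) H 2) {F : V → H} (hF : Integrable F) :
    (𝓕 g : Lp (α := V) H 2) =ᵐ[volume] 𝓕 F ↔ g =ᵐ[volume] F := by
  have hLp (h : Lp (α := V) H 2) : LocallyIntegrable h :=
    (Lp.memLp h).locallyIntegrable one_le_two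
  rw [ae_eq_iff_forall_integral_schwartz_smul_eq (hLp _)
      (continuous_fourier_of_integrable hF).locallyIntegrable,
    ae_eq_iff_forall_integral_schwartz_smul_eq (hLp _) hF.locallyIntegrable]
  simp only [integral_schwartz_smul_Lp_fourier_eq, integral_schwartz_smul_fourier_eq _ hF]
  refine ⟨fun h S ↦ ?_, fun h S ↦ h (𝓕 S)⟩
  simpa only [fourier_fourierInv_eq] using h (𝓕⁻ S)

theorem eLpNorm_fourier_eq_of_Lp_ae_eq {g : Lp (α := V) H 2} {F : V → H} (hF : Integrable F)
    (hg : g =ᵐ[volume] F) : eLpNorm (𝓕 F) 2 = eLpNorm F 2 := by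
  rw [← eLpNorm_congr_ae hg, ← eLpNorm_congr_ae ((Lp_fourier_ae_eq_iff g hF).2 hg),
    ← Lp.enorm_def, ← Lp.enorm_def, ← ofReal_norm, ← ofReal_norm, Lp.norm_fourier_eq]

theorem eLpNorm_fourier_eq {F : V → H} (hF : Integrable F) :
    eLpNorm (𝓕 F) 2 = eLpNorm F 2 := by
  by_cases hF2 : MemLp F 2
  · exact eLpNorm_fourier_eq_of_Lp_ae_eq hF hF2.coeFn_toLp
  by_cases hFF2 : MemLp (𝓕 F) 2
  · refine eLpNorm_fourier_eq_of_Lp_ae_eq (g := 𝓕⁻ (hFF2.toLp _)) hF ?_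
    rw [← Lp_fourier_ae_eq_iff _ hF, fourier_fourierInv_eq]
    exact hFF2.coeFn_toLp
  · have h_top {G : V → H} (hG : AEStronglyMeasurable G) (h : ¬ MemLp G 2) :
        eLpNorm G 2 = ⊤ := by simpa [MemLp, hG] using h
    rw [h_top hF.1 hF2, h_top (continuous_fourier_of_integrable hF).aestronglyMeasurable hFF2]

theorem eLpNorm_convolution_eq_eLpNorm_fourier_smul_fourier {k : V → ℂ} {F : V → H}
    (hk : Integrable k) (hF : Integrable F) :
    eLpNorm (k ⋆[lsmul ℂ ℂ] F) 2 = eLpNorm (fun ξ ↦ 𝓕 k ξ • 𝓕 F ξ) 2 := by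
  have h_fourier : 𝓕 (k ⋆[lsmul ℂ ℂ] F) = fun ξ ↦ 𝓕 k ξ • 𝓕 F ξ :=
    funext (fourier_smul_convolution_eq hk hF)
  exact h_fourier ▸ (eLpNorm_fourier_eq (hk.integrable_convolution _ hF)).symm

theorem eLpNorm_le_of_enorm_le_liminf {α E E' : Type*} [MeasurableSpace α] [NormedAddCommGroup E]
    [NormedAddCommGroup E'] {μ : Measure α} {p : ℝ≥0∞} (hp0 : p ≠ 0) (hp : p ≠ ⊤)
    {f : α → E} {g : ℕ → α → E'} {C : ℝ≥0∞} (hg : ∀ n, AEStronglyMeasurable (g n) μ)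
    (hfg : ∀ᵐ x ∂μ, ‖f x‖ₑ ≤ liminf (fun n ↦ ‖g n x‖ₑ) atTop)
    (hgC : ∀ n, eLpNorm (g n) p μ ≤ C) : eLpNorm f p μ ≤ C := by
  have hp' : 0 < p.toReal := ENNReal.toReal_pos hp0 hp
  have h_liminf (u : ℕ → ℝ≥0∞) :
      liminf u atTop ^ p.toReal = liminf (fun n ↦ u n ^ p.toReal) atTop :=
    (ENNReal.orderIsoRpow p.toReal hp').liminf_apply
  simp only [eLpNorm_eq_lintegral_rpow_enorm_toReal hp0 hp, one_div,
    ENNReal.rpow_inv_le_iff hp'] at hgC ⊢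
  calc ∫⁻ x, ‖f x‖ₑ ^ p.toReal ∂μ
      ≤ ∫⁻ x, liminf (fun n ↦ ‖g n x‖ₑ ^ p.toReal) atTop ∂μ := by
        refine lintegral_mono_ae (hfg.mono fun x hx ↦ ?_)
        rw [← h_liminf]
        gcongr
    _ ≤ liminf (fun n ↦ ∫⁻ x, ‖g n x‖ₑ ^ p.toReal ∂μ) atTop :=
        lintegral_liminf_le' fun n ↦ (hg n).enorm.pow_const _
    _ ≤ C ^ p.toReal :=
        liminf_le_of_le (by isBoundedDefault) fun b hb ↦
          let ⟨n, hn⟩ := hb.exists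
          hn.trans (hgC n)

-- Where the convolution integral diverges, the left-hand side is `0` by convention.
theorem enorm_convolution_le_liminf_indicator {𝕜 G E E' E'' : Type*} [NontriviallyNormedField 𝕜]
    [NormedAddCommGroup E] [NormedAddCommGroup E'] [NormedAddCommGroup E''] [NormedSpace 𝕜 E]
    [NormedSpace 𝕜 E'] [NormedSpace 𝕜 E''] [NormedSpace ℝ E''] [SeminormedAddCommGroup G]
    [MeasurableSpace G] [BorelSpace G] {μ : Measure G}
    (L : E →L[𝕜] E' →L[𝕜] E'') (k : G → E) (F : G → E') (u : G) :
    ‖(k ⋆[L, μ] F) u‖ₑ ≤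
      liminf (fun n : ℕ ↦
        ‖(k ⋆[L, μ] (Metric.closedBall (0 : G) n).indicator F) u‖ₑ) atTop := by
  by_cases h : ConvolutionExistsAt k F u L μ
  · have h_indicator (n : ℕ) :
        (fun t ↦ L (k t) ((Metric.closedBall (0 : G) n).indicator F (u - t))) =
          (Metric.closedBall u n).indicator fun t ↦ L (k t) (F (u - t)) := by
      ext t
      have h_mem : u - t ∈ Metric.closedBall (0 : G) n ↔ t ∈ Metric.closedBall u n := by
        rw [mem_closedBall_zero_iff, mem_closedBall_iff_norm']
      by_cases ht : t ∈ Metric.closedBall u n <;> simp [Set.indicator, h_mem, ht]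
    have h_tendsto : Tendsto
        (fun n : ℕ ↦ (k ⋆[L, μ] (Metric.closedBall (0 : G) n).indicator F) u) atTop
        (𝓝 ((k ⋆[L, μ] F) u)) := by
      simp only [convolution, h_indicator]
      refine tendsto_integral_of_dominated_convergence (fun t ↦ ‖L (k t) (F (u - t))‖)
        (fun n ↦ AEStronglyMeasurable.indicator h.1 measurableSet_closedBall) h.norm
        (fun n ↦ .of_forall fun t ↦ norm_indicator_le_norm_self _ t)
        (.of_forall fun t ↦ tendsto_const_nhds.congr' ?_)
      filter_upwards [eventually_ge_atTop ⌈dist t u⌉₊] with n hn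
      rw [Set.indicator_of_mem (Metric.mem_closedBall.2 (Nat.ceil_le.1 hn))]
    exact h_tendsto.enorm.liminf_eq.ge
  · rw [convolution, integral_undef h, enorm_zero]
    exact zero_le

theorem eLpNorm_convolution_le_of_integrable {k : V → ℂ} (hk : Integrable k) {C : ℝ≥0∞}
    (hC : ∀ ξ, ‖𝓕 k ξ‖ₑ ≤ C) {F : V → H} (hF : Integrable F) :
    eLpNorm (k ⋆[lsmul ℂ ℂ] F) 2 ≤ C * eLpNorm F 2 := by
  rw [eLpNorm_convolution_eq_eLpNorm_fourier_smul_fourier hk hF, ← eLpNorm_fourier_eq hF]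
  have h_ae : ∀ᵐ ξ, ‖𝓕 k ξ • 𝓕 F ξ‖ₑ ≤ C * ‖𝓕 F ξ‖ₑ := .of_forall fun ξ ↦ by
    rw [enorm_smul]
    gcongr
    exact hC ξ
  exact eLpNorm_le_mul_eLpNorm_of_ae_le_mul'' 2
    (continuous_fourier_of_integrable hF).aestronglyMeasurable h_ae

theorem eLpNorm_convolution_le {k : V → ℂ} (hk : Integrable k) {C : ℝ≥0∞}
    (hC : ∀ ξ, ‖𝓕 k ξ‖ₑ ≤ C) {F : V → H} (hF : MemLp F 2) :
    eLpNorm (k ⋆[lsmul ℂ ℂ] F) 2 ≤ C * eLpNorm F 2 := by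
  have h_integrable (n : ℕ) : Integrable ((Metric.closedBall (0 : V) n).indicator F) := by
    have : IsFiniteMeasure (volume.restrict (Metric.closedBall (0 : V) n)) :=
      isFiniteMeasure_restrict.2 measure_closedBall_lt_top.ne
    exact (integrable_indicator_iff measurableSet_closedBall).2
      ((hF.restrict _).integrable one_le_two)
  refine eLpNorm_le_of_enorm_le_liminf two_ne_zero ENNReal.ofNat_ne_top
    (fun n ↦ (hk.integrable_convolution _ (h_integrable n)).1)
    (.of_forall (enorm_convolution_le_liminf_indicator (lsmul ℂ ℂ) k F)) fun n ↦ ?_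
  refine (eLpNorm_convolution_le_of_integrable hk hC (h_integrable n)).trans ?_
  gcongr
  exact eLpNorm_indicator_le F

theorem enorm_le_of_forall_schwartz_eLpNorm_smul_le {μ : Measure V} [μ.IsOpenPosMeasure]
    [IsFiniteMeasureOnCompacts μ] {m : V → ℂ} (hm : Continuous m) {p C : ℝ≥0∞} (hp : p ≠ 0)
    (h : ∀ S : 𝓢(V, ℂ), eLpNorm (fun x ↦ m x • S x) p μ ≤ C * eLpNorm S p μ) (ξ : V) :
    ‖m ξ‖ₑ ≤ C := by
  refine ENNReal.le_of_forall_nnreal_lt fun r hr ↦ ?_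
  obtain ⟨b, hbs, hbc, hb, -, hbξ⟩ := exists_contDiff_tsupport_subset (n := ⊤)
    ((isOpen_lt continuous_const hm.enorm).mem_nhds hr)
  have hbc' : HasCompactSupport (Complex.ofRealCLM ∘ b) := hbc.comp_left (map_zero _)
  let S : 𝓢(V, ℂ) := hbc'.toSchwartzMap (Complex.ofRealCLM.contDiff.comp hb)
  have hS (x : V) : S x = b x := rfl
  have hS_zero : eLpNorm S p μ ≠ 0 := by
    rw [Ne, eLpNorm_eq_zero_iff S.continuous.aestronglyMeasurable hp,
      S.continuous.ae_eq_iff_eq μ continuous_zero]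
    exact fun h0 ↦ by simpa [hS, hbξ] using congr_fun h0 ξ
  have hS_top : eLpNorm S p μ ≠ ⊤ :=
    (S.continuous.memLp_of_hasCompactSupport hbc').eLpNorm_ne_top
  have h_pointwise (x : V) : ‖((r : ℝ) • ⇑S) x‖ₑ ≤ ‖m x • S x‖ₑ := by
    by_cases hx : x ∈ tsupport b
    · rw [Pi.smul_apply, enorm_smul, enorm_smul]
      gcongr
      have hrx : (r : ℝ≥0∞) < ‖m x‖ₑ := hbs hx
      simpa using hrx.le
    · simp [hS, image_eq_zero_of_notMem_tsupport hx]
  have h_bump : r * eLpNorm S p μ ≤ eLpNorm (fun x ↦ m x • S x) p μ := by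
    simpa [eLpNorm_const_smul] using eLpNorm_mono_enorm (p := p) (μ := μ) h_pointwise
  exact (ENNReal.mul_le_mul_iff_left hS_zero hS_top).1 (h_bump.trans (h S))

theorem enorm_fourier_le_of_forall_schwartz_eLpNorm_convolution_le {k : V → ℂ} (hk : Integrable k)
    {C : ℝ≥0∞} (h : ∀ S : 𝓢(V, ℂ), eLpNorm (k ⋆[lsmul ℂ ℂ] ⇑S) 2 ≤ C * eLpNorm S 2) (ξ : V) :
    ‖𝓕 k ξ‖ₑ ≤ C := by
  refine enorm_le_of_forall_schwartz_eLpNorm_smul_le (μ := volume)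
    (continuous_fourier_of_integrable hk) two_ne_zero (fun S ↦ ?_) ξ
  obtain ⟨S, rfl⟩ : ∃ R : 𝓢(V, ℂ), 𝓕 R = S := ⟨𝓕⁻ S, fourier_fourierInv_eq S⟩
  have h_conv := eLpNorm_convolution_eq_eLpNorm_fourier_smul_fourier hk S.integrable
  rw [SchwartzMap.fourier_coe, ← h_conv, eLpNorm_fourier_eq S.integrable]
  exact h S

end Fourier

section LogCoordinates

open ContinuousLinearMap Filter FourierTransform Real
open scoped Convolution ENNReal NNReal

variable {E : Type*} [NormedAddCommGroup E]

theorem range_exp_neg : Set.range (fun u : ℝ ↦ rexp (-u)) = Set.Ioi 0 :=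
  (neg_surjective.range_comp rexp).trans range_exp

theorem injective_exp_neg : Function.Injective fun u : ℝ ↦ rexp (-u) :=
  exp_injective.comp neg_injective

theorem hasDerivAt_exp_neg (u : ℝ) : HasDerivAt (fun u ↦ rexp (-u)) (-rexp (-u)) u := by
  simpa using (hasDerivAt_neg u).exp

theorem integral_Ioi_eq_integral_exp_neg [NormedSpace ℝ E] (g : ℝ → E) :
    ∫ t in Set.Ioi 0, g t = ∫ u, rexp (-u) • g (rexp (-u)) := by
  simpa [range_exp_neg] using integral_image_eq_integral_abs_deriv_smul MeasurableSet.univ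
    (fun u _ ↦ (hasDerivAt_exp_neg u).hasDerivWithinAt) injective_exp_neg.injOn g

theorem lintegral_Ioi_eq_lintegral_exp_neg (g : ℝ → ℝ≥0∞) :
    ∫⁻ t in Set.Ioi 0, g t = ∫⁻ u, ENNReal.ofReal (rexp (-u)) * g (rexp (-u)) := by
  simpa [range_exp_neg] using lintegral_image_eq_lintegral_abs_deriv_mul MeasurableSet.univ
    (fun u _ ↦ (hasDerivAt_exp_neg u).hasDerivWithinAt) injective_exp_neg.injOn g

theorem integrableOn_Ioi_iff_integrable_exp_neg [NormedSpace ℝ E] (g : ℝ → E) :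
    IntegrableOn g (Set.Ioi 0) ↔ Integrable fun u ↦ rexp (-u) • g (rexp (-u)) := by
  simpa [range_exp_neg] using integrableOn_image_iff_integrableOn_abs_deriv_smul
    MeasurableSet.univ (fun u _ ↦ (hasDerivAt_exp_neg u).hasDerivWithinAt)
    injective_exp_neg.injOn g

theorem lintegral_weightMeasure (a : ℝ) (g : ℝ → ℝ≥0∞) :
    ∫⁻ x, g x ∂weightMeasure a =
      (∫⁻ u, ENNReal.ofReal (rexp (-(a + 1) * u)) * g (rexp (-u))) +
        ∫⁻ u, ENNReal.ofReal (rexp (-(a + 1) * u)) * g (-rexp (-u)) := by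
  have h_halfLine (g : ℝ → ℝ≥0∞) : ∫⁻ x in Set.Ioi 0, ENNReal.ofReal (|x| ^ a) * g x =
      ∫⁻ u, ENNReal.ofReal (rexp (-(a + 1) * u)) * g (rexp (-u)) := by
    rw [lintegral_Ioi_eq_lintegral_exp_neg]
    congr with u
    rw [← mul_assoc, ← ENNReal.ofReal_mul (exp_nonneg _), abs_exp, ← exp_mul, ← exp_add]
    ring_nf
  have h_neg : ∫⁻ x in (Set.Ioi 0)ᶜ, ENNReal.ofReal (|x| ^ a) * g x =
      ∫⁻ x in Set.Ioi 0, ENNReal.ofReal (|x| ^ a) * g (-x) := by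
    rw [Set.compl_Ioi, ← restrict_Iio_eq_restrict_Iic,
      ← (Measure.measurePreserving_neg volume).setLIntegral_comp_preimage_emb
        (MeasurableEquiv.neg ℝ).measurableEmbedding]
    simp
  have hw : AEMeasurable fun x : ℝ ↦ ENNReal.ofReal (|x| ^ a) := by fun_prop
  rw [weightMeasure, lintegral_withDensity_eq_lintegral_mul_non_measurable₀ _ hw
    (.of_forall fun _ ↦ ENNReal.ofReal_lt_top)]
  simp only [Pi.mul_apply]
  rw [← lintegral_add_compl _ measurableSet_Ioi, h_neg, h_halfLine, h_halfLine]

theorem quasiMeasurePreserving_exp_neg (a : ℝ) :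
    Measure.QuasiMeasurePreserving (fun u ↦ rexp (-u)) volume (weightMeasure a) := by
  refine ⟨by fun_prop, .mk fun s hs h0 ↦ ?_⟩
  have hs' : MeasurableSet ((fun u ↦ rexp (-u)) ⁻¹' s) := hs.preimage (by fun_prop)
  rw [← lintegral_indicator_one hs, lintegral_weightMeasure, add_eq_zero] at h0
  rw [Measure.map_apply (by fun_prop) hs, ← lintegral_indicator_one hs',
    lintegral_eq_zero_iff (measurable_one.indicator hs')]
  refine ((lintegral_eq_zero_iff ?_).1 h0.1).mono fun u hu ↦ ?_
  · fun_prop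
  · simpa [(exp_pos _).not_ge] using hu

theorem measurePreserving_neg_weightMeasure (a : ℝ) :
    MeasurePreserving Neg.neg (weightMeasure a) (weightMeasure a) := by
  refine ⟨measurable_neg, Measure.ext_of_lintegral _ fun g hg ↦ ?_⟩
  rw [lintegral_map hg measurable_neg, lintegral_weightMeasure, lintegral_weightMeasure, add_comm]
  simp only [neg_neg]

/-- The isometry `L^p(ℝ_{>0}, x^a dx) → L^p(ℝ, du)` given by the substitution `x = e^{-u}`, where
`c = (a + 1) / p`. The orientation `x = e^{-u}` is that of `mellin_eq_fourier`; the negative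
half-line is treated by applying `logPullback` to the reflected function `g ∘ Neg.neg`. -/
noncomputable def logPullback [NormedSpace ℝ E] (c : ℝ) (g : ℝ → E) (u : ℝ) : E :=
  rexp (-c * u) • g (rexp (-u))

theorem eLpNorm_weightMeasure_rpow [NormedSpace ℝ E] (a : ℝ) {p : ℝ≥0} (hp : p ≠ 0) (g : ℝ → E) :
    eLpNorm g p (weightMeasure a) ^ (p : ℝ) =
      eLpNorm (logPullback ((a + 1) / p) g) p ^ (p : ℝ) +
        eLpNorm (logPullback ((a + 1) / p) (g ∘ Neg.neg)) p ^ (p : ℝ) := by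
  have h_weight (u : ℝ) : ENNReal.ofReal (rexp (-(a + 1) * u)) =
      ‖rexp (-((a + 1) / p) * u)‖ₑ ^ (p : ℝ) := by
    have hp' : (p : ℝ) ≠ 0 := NNReal.coe_ne_zero.2 hp
    rw [Real.enorm_of_nonneg (exp_nonneg _), ENNReal.ofReal_rpow_of_pos (exp_pos _), ← exp_mul]
    field_simp
  simp only [eLpNorm_nnreal_pow_eq_lintegral hp, lintegral_weightMeasure, logPullback, enorm_smul,
    ENNReal.mul_rpow_of_nonneg _ _ (NNReal.coe_nonneg p), h_weight, Function.comp_apply]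

theorem logPullback_congr_ae [NormedSpace ℝ E] {a : ℝ} (c : ℝ) {f g : ℝ → E}
    (h : f =ᵐ[weightMeasure a] g) : logPullback c f =ᵐ[volume] logPullback c g :=
  ((quasiMeasurePreserving_exp_neg a).ae_eq_comp h).mono fun _ hu ↦ congrArg (_ • ·) hu

theorem eLpNorm_logPullback_le [NormedSpace ℝ E] (a : ℝ) {p : ℝ≥0} (hp : p ≠ 0) (g : ℝ → E) :
    eLpNorm (logPullback ((a + 1) / p) g) p ≤ eLpNorm g p (weightMeasure a) := by
  have hp' : 0 < (p : ℝ) := NNReal.coe_pos.2 (pos_iff_ne_zero.2 hp)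
  rw [← ENNReal.rpow_le_rpow_iff hp', eLpNorm_weightMeasure_rpow a hp]
  exact le_self_add

theorem memLp_logPullback [NormedSpace ℝ E] {a : ℝ} {p : ℝ≥0} (hp : p ≠ 0) {g : ℝ → E}
    (hg : MemLp g p (weightMeasure a)) : MemLp (logPullback ((a + 1) / p) g) p := by
  refine ⟨.smul (by fun_prop) (hg.1.comp_quasiMeasurePreserving
    (quasiMeasurePreserving_exp_neg a)), ?_⟩
  exact (eLpNorm_logPullback_le a hp g).trans_lt hg.2

theorem integrable_logPullback_iff [NormedSpace ℂ E] (c : ℝ) (g : ℝ → E) :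
    Integrable (logPullback c g) ↔ MellinConvergent g c := by
  rw [MellinConvergent, integrableOn_Ioi_iff_integrable_exp_neg]
  congr! 2 with u
  rw [← Complex.ofReal_one, ← Complex.ofReal_sub, ← Complex.ofReal_cpow (exp_nonneg _),
    ← exp_mul, Complex.coe_smul, smul_smul, ← exp_add, logPullback]
  ring_nf

theorem khat_eq_fourier_logPullback (φ : ℝ → ℂ) (c ξ : ℝ) :
    khat φ c ξ = 𝓕 (logPullback c φ) (-ξ / (2 * π)) := by
  calc khat φ c ξ = mellin φ (c - ξ * Complex.I) := by
        simp only [khat, mellin, smul_eq_mul]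
        congr with t
        ring_nf
    _ = 𝓕 (logPullback c φ) (-ξ / (2 * π)) := by
        have hre : (c - ξ * Complex.I).re = c := by simp
        have him : (c - ξ * Complex.I).im = -ξ := by simp
        rw [mellin_eq_fourier, hre, him]
        rfl

theorem logPullback_Hphi (c : ℝ) (φ f : ℝ → ℂ) :
    logPullback c (Hphi φ f) = logPullback c φ ⋆[lsmul ℂ ℂ] logPullback c f := by
  ext u
  simp only [logPullback, Hphi, convolution, lsmul_apply, integral_Ioi_eq_integral_exp_neg]
  rw [← integral_smul]
  congr with s
  rw [← exp_sub, neg_sub_neg, neg_sub, mul_sub, exp_sub (-c * u)]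
  simp only [Complex.real_smul, smul_eq_mul]
  push_cast
  field_simp

theorem Hphi_comp_neg (φ f : ℝ → ℂ) : Hphi φ (f ∘ Neg.neg) = Hphi φ f ∘ Neg.neg := by
  ext x
  simp [Hphi, neg_div]

/-- The right inverse of `logPullback c` by functions vanishing on the negative half-line. -/
noncomputable def logExtend [NormedSpace ℝ E] (c : ℝ) (S : ℝ → E) : ℝ → E :=
  (Set.Ioi 0).indicator fun x ↦ x ^ (-c) • S (-log x)

theorem logPullback_logExtend [NormedSpace ℝ E] (c : ℝ) (S : ℝ → E) :
    logPullback c (logExtend c S) = S := by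
  ext u
  simp [logPullback, logExtend, exp_pos, ← exp_mul, smul_smul, ← exp_add, mul_comm]

theorem logPullback_logExtend_comp_neg [NormedSpace ℝ E] (c : ℝ) (S : ℝ → E) :
    logPullback c (logExtend c S ∘ Neg.neg) = 0 := by
  ext u
  simp [logPullback, logExtend, exp_nonneg]

theorem eLpNorm_logExtend [NormedSpace ℝ E] (a : ℝ) {p : ℝ≥0} (hp : p ≠ 0) (S : ℝ → E) :
    eLpNorm (logExtend ((a + 1) / p) S) p (weightMeasure a) = eLpNorm S p := by
  have hp' : (p : ℝ) ≠ 0 := NNReal.coe_ne_zero.2 hp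
  refine ENNReal.rpow_left_injective hp' ?_
  simp [eLpNorm_weightMeasure_rpow a hp, logPullback_logExtend, logPullback_logExtend_comp_neg,
    hp, pos_iff_ne_zero]

theorem memLp_logExtend [NormedSpace ℝ E] (a : ℝ) {p : ℝ≥0} (hp : p ≠ 0) {S : ℝ → E}
    (hS : Continuous S) (hS' : MemLp S p) :
    MemLp (logExtend ((a + 1) / p) S) p (weightMeasure a) := by
  refine ⟨.indicator ?_ measurableSet_Ioi, (eLpNorm_logExtend a hp S).trans_lt hS'.2⟩
  have : StronglyMeasurable (S ∘ fun x ↦ -log x) :=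
    hS.stronglyMeasurable.comp_measurable (by fun_prop)
  exact .smul (by fun_prop) this.aestronglyMeasurable

theorem eLpNorm_Hphi_congr_ae {a : ℝ} {p : ℝ≥0} (hp : p ≠ 0) (φ : ℝ → ℂ) {f g : ℝ → ℂ}
    (h : f =ᵐ[weightMeasure a] g) :
    eLpNorm (Hphi φ f) p (weightMeasure a) = eLpNorm (Hphi φ g) p (weightMeasure a) := by
  have h_logPullback {f g : ℝ → ℂ} (c : ℝ) (h : f =ᵐ[weightMeasure a] g) :
      logPullback c (Hphi φ f) = logPullback c (Hphi φ g) := by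
    rw [logPullback_Hphi, logPullback_Hphi]
    exact convolution_congr _ .rfl (logPullback_congr_ae c h)
  have h_neg := (measurePreserving_neg_weightMeasure a).quasiMeasurePreserving.ae_eq_comp h
  have hp' : (p : ℝ) ≠ 0 := NNReal.coe_ne_zero.2 hp
  refine ENNReal.rpow_left_injective hp' ?_
  simp only [eLpNorm_weightMeasure_rpow a hp, ← Hphi_comp_neg, h_logPullback _ h,
    h_logPullback _ h_neg]

end LogCoordinates

section HausdorffOperator

open ContinuousLinearMap FourierTransform Real
open scoped Convolution ENNReal NNReal

variable {a : ℝ} {φ : ℝ → ℂ} {C : ℝ≥0∞}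

theorem forall_enorm_khat_le_iff (c : ℝ) :
    (∀ ξ, ‖khat φ c ξ‖ₑ ≤ C) ↔ ∀ ξ, ‖𝓕 (logPullback c φ) ξ‖ₑ ≤ C := by
  refine ⟨fun h ξ ↦ ?_, fun h ξ ↦ khat_eq_fourier_logPullback φ c ξ ▸ h _⟩
  have h_khat : khat φ c (-(2 * π * ξ)) = 𝓕 (logPullback c φ) ξ := by
    rw [khat_eq_fourier_logPullback, neg_neg, mul_div_cancel_left₀ ξ two_pi_pos.ne']
  exact h_khat ▸ h _

theorem eLpNorm_Hphi_le_of_enorm_khat_le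
    (hφ : MellinConvergent φ (((a + 1) / 2 : ℝ) : ℂ))
    (hC : ∀ ξ, ‖khat φ ((a + 1) / 2) ξ‖ₑ ≤ C) {f : ℝ → ℂ} (hf : MemLp f 2 (weightMeasure a)) :
    eLpNorm (Hphi φ f) 2 (weightMeasure a) ≤ C * eLpNorm f 2 (weightMeasure a) := by
  have hk : Integrable (logPullback ((a + 1) / 2) φ) := (integrable_logPullback_iff _ _).2 hφ
  have h_half {g : ℝ → ℂ} (hg : MemLp g 2 (weightMeasure a)) :
      eLpNorm (logPullback ((a + 1) / 2) (Hphi φ g)) 2 ^ (2 : ℝ) ≤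
        C ^ (2 : ℝ) * eLpNorm (logPullback ((a + 1) / 2) g) 2 ^ (2 : ℝ) := by
    rw [logPullback_Hphi, ← ENNReal.mul_rpow_of_nonneg _ _ zero_le_two]
    gcongr
    exact eLpNorm_convolution_le hk ((forall_enorm_khat_le_iff _).1 hC)
      (memLp_logPullback two_ne_zero hg)
  have hf_neg : MemLp (f ∘ Neg.neg) 2 (weightMeasure a) :=
    hf.comp_measurePreserving (measurePreserving_neg_weightMeasure a)
  have h_norm (g : ℝ → ℂ) := eLpNorm_weightMeasure_rpow a (p := 2) two_ne_zero g
  push_cast at h_norm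
  rw [← ENNReal.rpow_le_rpow_iff two_pos, ENNReal.mul_rpow_of_nonneg _ _ zero_le_two,
    h_norm, h_norm, mul_add, ← Hphi_comp_neg]
  exact add_le_add (h_half hf) (h_half hf_neg)

theorem enorm_khat_le_of_forall_eLpNorm_Hphi_le
    (hφ : MellinConvergent φ (((a + 1) / 2 : ℝ) : ℂ))
    (h : ∀ f, MemLp f 2 (weightMeasure a) →
      eLpNorm (Hphi φ f) 2 (weightMeasure a) ≤ C * eLpNorm f 2 (weightMeasure a)) (ξ : ℝ) :
    ‖khat φ ((a + 1) / 2) ξ‖ₑ ≤ C := by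
  have hk : Integrable (logPullback ((a + 1) / 2) φ) := (integrable_logPullback_iff _ _).2 hφ
  refine (forall_enorm_khat_le_iff _).2
    (enorm_fourier_le_of_forall_schwartz_eLpNorm_convolution_le hk fun S ↦ ?_) ξ
  have h_pullback (f : ℝ → ℂ) := eLpNorm_logPullback_le a (p := 2) two_ne_zero f
  have h_memLp : MemLp (logExtend ((a + 1) / (2 : ℝ≥0)) S) (2 : ℝ≥0) (weightMeasure a) :=
    memLp_logExtend a two_ne_zero S.continuous (S.memLp _)
  have h_eLpNorm := eLpNorm_logExtend a (p := 2) two_ne_zero S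
  push_cast at h_pullback h_memLp h_eLpNorm
  have h_conv : logPullback ((a + 1) / 2) (Hphi φ (logExtend ((a + 1) / 2) S)) =
      logPullback ((a + 1) / 2) φ ⋆[lsmul ℂ ℂ] ⇑S := by
    rw [logPullback_Hphi, logPullback_logExtend]
  rw [← h_conv, ← h_eLpNorm]
  exact (h_pullback _).trans (h _ h_memLp)

theorem opENorm_le_iff_forall_eLpNorm_Hphi_le
    {T : Lp ℂ 2 (weightMeasure a) →L[ℂ] Lp ℂ 2 (weightMeasure a)}
    (hT : ∀ f : Lp ℂ 2 (weightMeasure a), T f =ᵐ[weightMeasure a] Hphi φ f) :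
    ‖T‖ₑ ≤ C ↔ ∀ f, MemLp f 2 (weightMeasure a) →
      eLpNorm (Hphi φ f) 2 (weightMeasure a) ≤ C * eLpNorm f 2 (weightMeasure a) := by
  have h_enorm (f : Lp ℂ 2 (weightMeasure a)) :
      ‖T f‖ₑ = eLpNorm (Hphi φ f) 2 (weightMeasure a) := by
    rw [Lp.enorm_def, eLpNorm_congr_ae (hT f)]
  refine ⟨fun h f hf ↦ ?_, fun h ↦ T.opENorm_le_bound fun f ↦ ?_⟩
  · calc eLpNorm (Hphi φ f) 2 (weightMeasure a)
        = ‖T (hf.toLp f)‖ₑ := by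
          rw [h_enorm]
          exact (eLpNorm_Hphi_congr_ae two_ne_zero φ hf.coeFn_toLp).symm
      _ ≤ ‖T‖ₑ * ‖hf.toLp f‖ₑ := T.le_opENorm _
      _ ≤ C * eLpNorm f 2 (weightMeasure a) := by
          rw [Lp.enorm_toLp]
          gcongr
  · rw [h_enorm, Lp.enorm_def]
    exact h f (Lp.memLp f)

theorem stmt7_general (a : ℝ) (φ : ℝ → ℂ) (hφ : MellinConvergent φ (((a + 1) / 2 : ℝ) : ℂ))
    (T : Lp ℂ 2 (weightMeasure a) →L[ℂ] Lp ℂ 2 (weightMeasure a))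
    (hT : ∀ f : Lp ℂ 2 (weightMeasure a), T f =ᵐ[weightMeasure a] Hphi φ f) :
    ‖T‖ = ⨆ ξ : ℝ, ‖khat φ ((a + 1) / 2) ξ‖ := by
  have h_enorm : ‖T‖ₑ = ⨆ ξ : ℝ, ‖khat φ ((a + 1) / 2) ξ‖ₑ := eq_of_forall_ge_iff fun C ↦ by
    rw [iSup_le_iff, opENorm_le_iff_forall_eLpNorm_Hphi_le hT]
    exact ⟨enorm_khat_le_of_forall_eLpNorm_Hphi_le hφ,
      fun hC _ hf ↦ eLpNorm_Hphi_le_of_enorm_khat_le hφ hC hf⟩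
  simpa [ENNReal.toReal_iSup] using congrArg ENNReal.toReal h_enorm

end HausdorffOperator

/-- For `a > −1` and `φ` measurable with
`∫₀^∞ |φ(t)| t^{(a+1)/2 − 1} dt < ∞`, the operator norm of the Hausdorff operator
on `L²(ℝ, |x|^a)` equals `sup_{ξ ∈ ℝ} |k̂_{a,2}(ξ)|`. -/
theorem stmt7 (a : ℝ) (ha : -1 < a) (φ : ℝ → ℂ) (hφm : Measurable φ)
    (hφ : IntegrableOn (fun t => ‖φ t‖ * t ^ ((a + 1) / 2 - 1)) (Set.Ioi (0 : ℝ)))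
    (T : Lp ℂ 2 (weightMeasure a) →L[ℂ] Lp ℂ 2 (weightMeasure a))
    (hT : ∀ f : Lp ℂ 2 (weightMeasure a), ⇑(T f) =ᵐ[weightMeasure a] Hphi φ ⇑f) :
    ‖T‖ = ⨆ ξ : ℝ, ‖khat φ ((a + 1) / 2) ξ‖ := by
  refine stmt7_general a φ ?_ T hT
  exact (mellin_convergent_iff_norm subset_rfl measurableSet_Ioi hφm.aestronglyMeasurable).2
    (by simpa [mul_comm] using hφ)
end
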